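/- arXiv:1112.2334 — 6 statements merged into one kernel-verified Lean document; each statement's English description precedes it below -/
import Mathlib

section
/- Let d ≥ 2 and let X₀ be a topological space with a point z₀ having an open neighborhood homeomorphic to O × ℝ^{e₀}, where O is an open neighborhood of the origin in the quadratic cone Q_{p,q} = {(x, y) ∈ ℝ^p × ℝ^q : ‖x‖² = ‖y‖²} (p, q ≥ 1), the homeomorphism taking z₀ to (0, 0). Inductively, for n = 0, …, M − 1, let Ψ_n : X_n → EuclideanSpace ℝ (Fin d) be continuous, let φ_n be the work map of an open k_n-chain with positive lengths, let u^n ∈ (S^{d-1})^{k_n} be non-aligned with φ_n(u^n) = Ψ_n(z_n), and set X_{n+1} = {(x, u) ∈ X_n × (S^{d-1})^{k_n} : Ψ_n(x) = φ_n(u)} and z_{n+1} = (z_n, u^n). Then z_M has an open neighborhood in X_M homeomorphic to O' × ℝ^E, where O' is an open neighborhood of the origin in the same quadratic cone Q_{p,q} and E = e₀ + ∑_{n=0}^{M−1} (k_n(d−1) − d), the homeomorphism taking z_M to (0, 0). -/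
open scoped BigOperators

/-- The quadratic cone `Q_{p,q} = {(x, y) : ‖x‖² = ‖y‖²}`. -/
def quadCone (p q : ℕ) :
    Set (EuclideanSpace ℝ (Fin p) × EuclideanSpace ℝ (Fin q)) :=
  {z | ‖z.1‖ ^ 2 = ‖z.2‖ ^ 2}

/-!
Constraining the links of an open chain to be unit vectors and prescribing the end point is one
equation `chainMap lam v = (Ψ x, 1)`. At a non-aligned configuration the hyperplanes `(u i)ᗮ` span
the ambient space, so `chainMap lam` is a submersion there, and the implicit function theorem turns
it into a linear projection near `u`. Pulling this projection back along `Ψ` shows that the fiber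
product is locally the base times the kernel of the derivative, so each stage only adds a Euclidean
factor and the singular factor of the base point is never touched.
-/

open Topology Module
open scoped InnerProductSpace

/-- The pointed germs `(X, x)` and `(Y, y)` are homeomorphic, witnessed by an open partial
homeomorphism. With `y = (c, 0)` in a product `C × F`, this says that `X` is near `x` a neighborhood
of `c` times a vector space. -/
def LocallyHomeomorphicAt {X Y : Type*} [TopologicalSpace X] [TopologicalSpace Y]
    (x : X) (y : Y) : Prop :=
  ∃ f : OpenPartialHomeomorph X Y, x ∈ f.source ∧ f x = y

namespace LocallyHomeomorphicAt

variable {X Y Z : Type*} [TopologicalSpace X] [TopologicalSpace Y] [TopologicalSpace Z]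

protected lemma refl (x : X) : LocallyHomeomorphicAt x x :=
  ⟨.refl X, Set.mem_univ x, rfl⟩

protected lemma symm {x : X} {y : Y} (h : LocallyHomeomorphicAt x y) :
    LocallyHomeomorphicAt y x := by
  obtain ⟨f, hx, rfl⟩ := h
  exact ⟨f.symm, f.map_source hx, f.left_inv hx⟩

protected lemma trans {x : X} {y : Y} {z : Z} (hxy : LocallyHomeomorphicAt x y)
    (hyz : LocallyHomeomorphicAt y z) : LocallyHomeomorphicAt x z := by
  obtain ⟨f, hx, rfl⟩ := hxy
  obtain ⟨g, hy, rfl⟩ := hyz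
  exact ⟨f.trans g, by simp [hx, hy], rfl⟩

lemma prodMk {X' Y' : Type*} [TopologicalSpace X'] [TopologicalSpace Y'] {x : X} {y : Y}
    {x' : X'} {y' : Y'} (h : LocallyHomeomorphicAt x y) (h' : LocallyHomeomorphicAt x' y') :
    LocallyHomeomorphicAt (x, x') (y, y') := by
  obtain ⟨f, hx, rfl⟩ := h
  obtain ⟨f', hx', rfl⟩ := h'
  exact ⟨f.prod f', ⟨hx, hx'⟩, rfl⟩

lemma of_isOpenEmbedding {g : X → Y} (hg : IsOpenEmbedding g) (x : X) :
    LocallyHomeomorphicAt x (g x) :=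
  have : Nonempty X := ⟨x⟩
  ⟨hg.toOpenPartialHomeomorph, Set.mem_univ x, rfl⟩

lemma of_homeomorph (e : X ≃ₜ Y) (x : X) : LocallyHomeomorphicAt x (e x) :=
  of_isOpenEmbedding e.isOpenEmbedding x

lemma of_isOpen_of_isOpenEmbedding {U : Set X} (hU : IsOpen U) {x : X} (hx : x ∈ U) {g : U → Y}
    (hg : IsOpenEmbedding g) : LocallyHomeomorphicAt x (g ⟨x, hx⟩) :=
  (of_isOpenEmbedding hU.isOpenEmbedding_subtypeVal ⟨x, hx⟩).symm.trans (of_isOpenEmbedding hg _)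

section VectorSpaceFactor

variable {F : Type*} [NormedAddCommGroup F] [NormedSpace ℝ F]

lemma exists_isOpenEmbedding_prod {x : X} {c : Y} (h : LocallyHomeomorphicAt x (c, (0 : F))) :
    ∃ V : Set Y, IsOpen V ∧ ∃ (hc : c ∈ V) (g : V × F → X),
      IsOpenEmbedding g ∧ g (⟨c, hc⟩, 0) = x := by
  obtain ⟨f, hx, hfx⟩ := h
  have htarget : f.target ∈ 𝓝 (c, (0 : F)) := hfx ▸ f.open_target.mem_nhds (f.map_source hx)
  obtain ⟨V, W, hV, hc, hW, h0, hVW⟩ := mem_nhds_prod_iff'.1 htarget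
  obtain ⟨r, hr, hrW⟩ := Metric.isOpen_iff.1 hW 0 h0
  let b := OpenPartialHomeomorph.univBall (0 : F) r
  have hball : ∀ y, b y ∈ W := fun y => hrW <| by
    rw [← OpenPartialHomeomorph.univBall_target (0 : F) hr]
    exact b.map_source (by simp [b])
  have hb : IsOpenEmbedding b :=
    b.isOpenEmbedding (OpenPartialHomeomorph.univBall_source _ _)
  have hi : IsOpenEmbedding (Prod.map Subtype.val b : V × F → Y × F) :=
    hV.isOpenEmbedding_subtypeVal.prodMap hb
  have : Nonempty (V × F) := ⟨(⟨c, hc⟩, 0)⟩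
  let g := hi.toOpenPartialHomeomorph.trans f.symm
  have hg : g.source = Set.univ :=
    Set.eq_univ_of_forall fun y => ⟨trivial, hVW ⟨y.1.2, hball y.2⟩⟩
  refine ⟨V, hV, hc, g, g.isOpenEmbedding hg, ?_⟩
  calc f.symm (c, b 0) = f.symm (f x) := by
        rw [hfx, OpenPartialHomeomorph.univBall_apply_zero]
    _ = x := f.left_inv hx

lemma subtype_prod_iff {S : Set Y} {x : X} {c : Y} (hc : c ∈ S) :
    LocallyHomeomorphicAt x ((⟨c, hc⟩ : S), (0 : F)) ↔
      ∃ N : Set X, IsOpen N ∧ ∃ O : Set Y, O ⊆ S ∧ (∃ O₁, IsOpen O₁ ∧ O = O₁ ∩ S) ∧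
        ∃ (hcO : c ∈ O) (hx : x ∈ N) (h : N ≃ₜ O × F), h ⟨x, hx⟩ = (⟨c, hcO⟩, 0) := by
  constructor
  · intro h
    obtain ⟨V, hV, hcV, g, hg, rfl⟩ := h.exists_isOpenEmbedding_prod
    obtain ⟨O₁, hO₁, rfl⟩ := isOpen_induced_iff.1 hV
    let e := hg.toIsEmbedding.toHomeomorph
    let i := ((IsEmbedding.subtypeVal (p := (· ∈ S))).homeomorphImage
      (Subtype.val ⁻¹' O₁)).prodCongr (.refl F)
    refine ⟨Set.range g, hg.isOpen_range, Subtype.val '' (Subtype.val ⁻¹' O₁ : Set S),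
      Subtype.coe_image_subset _ _, ⟨O₁, hO₁, ?_⟩, ⟨_, hcV, rfl⟩, ⟨_, rfl⟩,
      e.symm.trans i, ?_⟩
    · rw [Subtype.image_preimage_coe, Set.inter_comm]
    · exact congrArg i (e.symm_apply_apply (⟨⟨c, hc⟩, hcV⟩, 0))
  · rintro ⟨N, hN, O, hOS, ⟨O₁, hO₁, rfl⟩, hcO, hx, h, hhx⟩
    have hincl : IsOpenEmbedding (Set.inclusion hOS) :=
      .inclusion hOS (by simpa using hO₁.preimage continuous_subtype_val)
    have hg := (hincl.prodMap (.id (X := F))).comp h.isOpenEmbedding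
    simpa [hhx] using of_isOpen_of_isOpenEmbedding hN hx hg

lemma prod_euclideanSpace {G : Type*} [NormedAddCommGroup G] [NormedSpace ℝ G]
    [FiniteDimensional ℝ F] [FiniteDimensional ℝ G] {x : X} {c : Y}
    {n : ℕ} (hn : finrank ℝ F + finrank ℝ G = n)
    (h : LocallyHomeomorphicAt x ((c, (0 : F)), (0 : G))) :
    LocallyHomeomorphicAt x (c, (0 : EuclideanSpace ℝ (Fin n))) := by
  let L : (F × G) ≃L[ℝ] EuclideanSpace ℝ (Fin n) :=
    ContinuousLinearEquiv.ofFinrankEq (by simpa using hn)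
  have hL := (LocallyHomeomorphicAt.refl c).prodMk (of_homeomorph L.toHomeomorph 0)
  simpa using h.trans ((of_homeomorph (.prodAssoc Y F G) _).trans hL)

end VectorSpaceFactor

end LocallyHomeomorphicAt

section FiberProduct

variable {A B K : Type*} [TopologicalSpace A] [TopologicalSpace B] [TopologicalSpace K]
  {f : A → B}

lemma prodMk_snd_chart_eq {X : Type*} {Ψ : X → B} (G : OpenPartialHomeomorph A (B × K))
    (hG : ∀ v ∈ G.source, (G v).1 = f v) (w : {w : X × A | f w.2 = Ψ w.1})
    (hw : w.1.2 ∈ G.source) : (Ψ w.1.1, (G w.1.2).2) = G w.1.2 :=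
  Prod.ext (w.2.symm.trans (hG _ hw).symm) rfl

variable {X : Type*} [TopologicalSpace X] {Ψ : X → B}

/-- The base change along `Ψ` of a chart `G` that straightens `f` to the projection `B × K → B`. It
identifies an open part of the fiber product of `f` and `Ψ` with an open part of `X × K`. -/
def fiberProductHomeomorph (hΨ : Continuous Ψ) (G : OpenPartialHomeomorph A (B × K))
    (hG : ∀ v ∈ G.source, (G v).1 = f v) :
    {w : {w : X × A | f w.2 = Ψ w.1} | w.1.2 ∈ G.source} ≃ₜ
      {a : X × K | (Ψ a.1, a.2) ∈ G.target} where
  toFun w := ⟨(w.1.1.1, (G w.1.1.2).2), by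
    simpa only [Set.mem_ofPred_eq, prodMk_snd_chart_eq G hG w.1 w.2] using G.map_source w.2⟩
  invFun a := ⟨⟨(a.1.1, G.symm (Ψ a.1.1, a.1.2)),
    (hG _ (G.map_target a.2)).symm.trans (congrArg Prod.fst (G.right_inv a.2))⟩, G.map_target a.2⟩
  left_inv w := by
    ext1; ext1
    refine Prod.ext rfl ?_
    simpa only [prodMk_snd_chart_eq G hG w.1 w.2] using G.left_inv w.2
  right_inv a := Subtype.ext <| Prod.ext rfl (congrArg Prod.snd (G.right_inv a.2) :)
  continuous_toFun := by
    have := G.continuousOn.comp_continuous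
      (f := fun w : {w : {w : X × A | f w.2 = Ψ w.1} | w.1.2 ∈ G.source} => w.1.1.2)
      (by fun_prop) fun w => w.2
    exact Continuous.subtype_mk (.prodMk (by fun_prop) (continuous_snd.comp this)) _
  continuous_invFun := by
    have := G.continuousOn_symm.comp_continuous
      (f := fun a : {a : X × K | (Ψ a.1, a.2) ∈ G.target} => (Ψ a.1.1, a.1.2))
      (by fun_prop) fun a => a.2
    exact .subtype_mk (.subtype_mk (.prodMk (by fun_prop) this) _) _

lemma locallyHomeomorphicAt_fiberProduct (hΨ : Continuous Ψ) (G : OpenPartialHomeomorph A (B × K))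
    (hG : ∀ v ∈ G.source, (G v).1 = f v) (w : {w : X × A | f w.2 = Ψ w.1}) (hw : w.1.2 ∈ G.source) :
    LocallyHomeomorphicAt w (w.1.1, (G w.1.2).2) := by
  have hsource : IsOpen {w : {w : X × A | f w.2 = Ψ w.1} | w.1.2 ∈ G.source} :=
    G.open_source.preimage (by fun_prop)
  have htarget : IsOpen {a : X × K | (Ψ a.1, a.2) ∈ G.target} :=
    G.open_target.preimage (by fun_prop)
  exact .of_isOpen_of_isOpenEmbedding hsource hw
    (htarget.isOpenEmbedding_subtypeVal.comp (fiberProductHomeomorph hΨ G hG).isOpenEmbedding)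

end FiberProduct

lemma locallyHomeomorphicAt_fiberProduct_of_hasStrictFDerivAt {𝕜 X E F : Type*}
    [NontriviallyNormedField 𝕜] [CompleteSpace 𝕜] [TopologicalSpace X]
    [NormedAddCommGroup E] [NormedSpace 𝕜 E] [CompleteSpace E]
    [NormedAddCommGroup F] [NormedSpace 𝕜 F] [FiniteDimensional 𝕜 F]
    {f : E → F} {f' : E →L[𝕜] F} {Ψ : X → F} (hΨ : Continuous Ψ)
    (w : {w : X × E | f w.2 = Ψ w.1}) (hf : HasStrictFDerivAt f f' w.1.2) (hf' : f'.range = ⊤) :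
    LocallyHomeomorphicAt w (w.1.1, (0 : f'.ker)) := by
  have h := locallyHomeomorphicAt_fiberProduct hΨ (hf.implicitToOpenPartialHomeomorph f f' hf')
    (fun v _ => hf.implicitToOpenPartialHomeomorph_fst hf' v) w
    (hf.mem_implicitToOpenPartialHomeomorph_source hf')
  rwa [hf.implicitToOpenPartialHomeomorph_self hf'] at h

section OpenChain

variable {ι E : Type*} [NormedAddCommGroup E] [NormedSpace ℝ E]

/-- A configuration `u` of the links of a chain is aligned if all links are parallel to a common
unit vector. -/
def IsAligned (u : ι → E) : Prop :=
  ∃ w : E, ‖w‖ = 1 ∧ ∀ i, u i = w ∨ u i = -w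

lemma iInf_span_singleton_eq_bot {u : ι → E} (hu : ∀ i, ‖u i‖ = 1) (hna : ¬ IsAligned u) :
    ⨅ i, ℝ ∙ u i = ⊥ := by
  rw [Submodule.eq_bot_iff]
  intro w hw
  by_contra hw0
  have hnorm : ‖w‖ ≠ 0 := norm_ne_zero_iff.2 hw0
  refine hna ⟨‖w‖⁻¹ • w, by simp [norm_smul, hnorm], fun i => ?_⟩
  obtain ⟨c, rfl⟩ := Submodule.mem_span_singleton.1 ((Submodule.mem_iInf _).1 hw i)
  have hc : c ≠ 0 := fun h => hw0 (by simp [h])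
  rcases abs_choice c with h | h <;> simp [norm_smul, hu, h, hc, smul_smul]

variable [Fintype ι]

/-- The end point of the open chain with link lengths `lam` and link vectors `v`, together with the
squared norms of the link vectors; the spheres are thus cut out by the second component. -/
def chainMap (lam : ι → ℝ) (v : ι → E) : E × (ι → ℝ) :=
  (∑ i, lam i • v i, fun i => ‖v i‖ ^ 2)

/-- The fiber product of `Ψ : X → E` with the work map of the open chain with link lengths
`lam`. -/
def chainFiberProduct {X : Type*} (Ψ : X → E) (lam : ι → ℝ) : Set (X × (ι → E)) :=
  {w | (∀ i, ‖w.2 i‖ = 1) ∧ Ψ w.1 = ∑ i, lam i • w.2 i}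

lemma chainFiberProduct_eq {X : Type*} (Ψ : X → E) (lam : ι → ℝ) :
    chainFiberProduct Ψ lam = {w | chainMap lam w.2 = (Ψ w.1, 1)} := by
  ext w
  simp only [chainFiberProduct, chainMap, Set.mem_ofPred_eq, Prod.ext_iff, funext_iff, Pi.one_apply,
    pow_eq_one_iff_of_nonneg (norm_nonneg _) two_ne_zero]
  rw [and_comm, eq_comm]

end OpenChain

section OpenChainDeriv

variable {ι E : Type*} [NormedAddCommGroup E] [InnerProductSpace ℝ E]

lemma iSup_orthogonal_span_singleton_eq_top [FiniteDimensional ℝ E] {u : ι → E}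
    (hu : ∀ i, ‖u i‖ = 1) (hna : ¬ IsAligned u) : ⨆ i, (ℝ ∙ u i)ᗮ = ⊤ := by
  rw [← Submodule.orthogonal_eq_bot_iff, ← Submodule.iInf_orthogonal]
  simpa only [Submodule.orthogonal_orthogonal] using iInf_span_singleton_eq_bot hu hna

variable [Fintype ι]

/-- The derivative of `chainMap lam` at `u`. -/
noncomputable def chainMapDeriv (lam : ι → ℝ) (u : ι → E) : (ι → E) →L[ℝ] E × (ι → ℝ) :=
  (∑ i, lam i • ContinuousLinearMap.proj (R := ℝ) (φ := fun _ : ι => E) i).prod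
    (.pi fun i => 2 • (innerSL ℝ (u i)).comp (.proj i))

lemma hasStrictFDerivAt_chainMap (lam : ι → ℝ) (u : ι → E) :
    HasStrictFDerivAt (chainMap lam) (chainMapDeriv lam u) u := by
  have hproj (i : ι) := (ContinuousLinearMap.proj (R := ℝ) (φ := fun _ : ι => E) i
    ).hasStrictFDerivAt (x := u)
  exact (HasStrictFDerivAt.fun_sum fun i _ => (hproj i).const_smul (lam i)).prodMk
    (hasStrictFDerivAt_pi.2 fun i => (hasStrictFDerivAt_norm_sq (u i)).comp u (hproj i))

lemma chainMapDeriv_apply (lam : ι → ℝ) (u v : ι → E) :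
    chainMapDeriv lam u v = (∑ i, lam i • v i, fun i => 2 * ⟪u i, v i⟫_ℝ) := by
  ext <;> simp [chainMapDeriv]

variable [FiniteDimensional ℝ E] {lam : ι → ℝ} {u : ι → E}

lemma range_chainMapDeriv_eq_top (hlam : ∀ i, lam i ≠ 0) (hu : ∀ i, ‖u i‖ = 1)
    (hna : ¬ IsAligned u) : (chainMapDeriv lam u).range = ⊤ := by
  rw [LinearMap.range_eq_top]
  rintro ⟨a, c⟩
  -- The components of `v` along the links produce `c`; the orthogonal ones correct the end point.
  have hmem : a - ∑ i, lam i • (c i / 2) • u i ∈ ⨆ i ∈ Finset.univ, (ℝ ∙ u i)ᗮ := by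
    simp [iSup_orthogonal_span_singleton_eq_top hu hna]
  obtain ⟨t, ht⟩ := (Submodule.mem_iSup_finset_iff_exists_sum _ _).1 hmem
  have horth (i : ι) : ⟪u i, (t i : E)⟫_ℝ = 0 :=
    Submodule.mem_orthogonal_singleton_iff_inner_right.1 (t i).2
  refine ⟨fun i => (c i / 2) • u i + (lam i)⁻¹ • t i, ?_⟩
  refine (chainMapDeriv_apply _ _ _).trans (Prod.ext ?_ (funext fun i => ?_))
  · simp [Finset.sum_add_distrib, smul_smul, hlam, ht]
  · simp [inner_add_right, inner_smul_right, horth, hu, mul_div_cancel₀]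

lemma finrank_ker_chainMapDeriv (hlam : ∀ i, lam i ≠ 0) (hu : ∀ i, ‖u i‖ = 1)
    (hna : ¬ IsAligned u) :
    finrank ℝ (chainMapDeriv lam u).ker =
      Fintype.card ι * (finrank ℝ E - 1) - finrank ℝ E := by
  have hrank := (chainMapDeriv lam u).toLinearMap.finrank_range_add_finrank_ker
  rw [range_chainMapDeriv_eq_top hlam hu hna] at hrank
  simp only [finrank_top, finrank_prod, finrank_pi, finrank_pi_fintype, Finset.sum_const,
    Finset.card_univ, smul_eq_mul] at hrank
  -- Surjectivity makes the truncated subtraction of `finrank ℝ E` exact.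
  rw [Nat.mul_sub_one]
  omega

lemma locallyHomeomorphicAt_chainFiberProduct {X : Type*} [TopologicalSpace X] {Ψ : X → E}
    (hΨ : Continuous Ψ) (hlam : ∀ i, lam i ≠ 0) (w : chainFiberProduct Ψ lam)
    (hna : ¬ IsAligned w.1.2) :
    LocallyHomeomorphicAt w (w.1.1, (0 : (chainMapDeriv lam w.1.2).ker)) := by
  let e := Homeomorph.setCongr (chainFiberProduct_eq Ψ lam)
  have hΨ' : Continuous fun x => (Ψ x, (1 : ι → ℝ)) := by fun_prop
  exact (LocallyHomeomorphicAt.of_homeomorph e w).trans <|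
    locallyHomeomorphicAt_fiberProduct_of_hasStrictFDerivAt hΨ' (e w)
      (hasStrictFDerivAt_chainMap lam _) (range_chainMapDeriv_eq_top hlam w.2.1 hna)

lemma LocallyHomeomorphicAt.chainFiberProduct_prod_euclideanSpace {X C : Type*}
    [TopologicalSpace X] [TopologicalSpace C] {c : C} {e m : ℕ} {Ψ : X → E} (hΨ : Continuous Ψ)
    (hlam : ∀ i, lam i ≠ 0) (w : chainFiberProduct Ψ lam) (hna : ¬ IsAligned w.1.2)
    (hm : e + (Fintype.card ι * (finrank ℝ E - 1) - finrank ℝ E) = m)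
    (h : LocallyHomeomorphicAt w.1.1 (c, (0 : EuclideanSpace ℝ (Fin e)))) :
    LocallyHomeomorphicAt w (c, (0 : EuclideanSpace ℝ (Fin m))) :=
  .prod_euclideanSpace (by simp [finrank_ker_chainMapDeriv hlam w.2.1 hna, hm]) <|
    (locallyHomeomorphicAt_chainFiberProduct hΨ hlam w hna).trans (h.prodMk (.refl _))

end OpenChainDeriv

theorem stmt_12_general {E : Type*} [NormedAddCommGroup E] [InnerProductSpace ℝ E]
    [FiniteDimensional ℝ E] {d : ℕ} (hd : finrank ℝ E = d) {M : ℕ}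
    {X : ℕ → Type*} [∀ n, TopologicalSpace (X n)] {z : ∀ n, X n} {k : ℕ → ℕ}
    {lam : ∀ n, Fin (k n) → ℝ} (hlam : ∀ n < M, ∀ i, lam n i ≠ 0)
    {Ψ : ∀ n, X n → E} (hΨ : ∀ n < M, Continuous (Ψ n))
    {u : ∀ n, Fin (k n) → E} (hna : ∀ n < M, ¬ IsAligned (u n))
    (step : ∀ n < M, X (n + 1) ≃ₜ chainFiberProduct (Ψ n) (lam n))
    (hstep : ∀ n (hn : n < M), (step n hn (z (n + 1))).1 = (z n, u n))
    {C : Type*} [TopologicalSpace C] {c : C} {e₀ : ℕ}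
    (base : LocallyHomeomorphicAt (z 0) (c, (0 : EuclideanSpace ℝ (Fin e₀)))) :
    LocallyHomeomorphicAt (z M) (c, (0 : EuclideanSpace ℝ
      (Fin (e₀ + ∑ n ∈ Finset.range M, (k n * (d - 1) - d))))) := by
  induction M with
  | zero => exact base
  | succ M ih =>
    have hM := ih (fun n hn => hlam n (by lia)) (fun n hn => hΨ n (by lia))
      (fun n hn => hna n (by lia)) (fun n hn => step n (by lia)) (fun n hn => hstep n (by lia))
    have hlt := M.lt_succ_self
    have hz := hstep M hlt
    refine (LocallyHomeomorphicAt.of_homeomorph (step M hlt) (z (M + 1))).trans <|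
      .chainFiberProduct_prod_euclideanSpace (e := e₀ + ∑ n ∈ Finset.range M, (k n * (d - 1) - d))
        (hΨ M hlt) (hlam M hlt) _ ?_ ?_ ?_
    · simpa only [hz] using hna M hlt
    · rw [hd, Fintype.card_fin, Finset.sum_range_succ, add_assoc]
    · simpa only [hz] using hM

theorem stmt_12 (d : ℕ) (hd : 2 ≤ d) (M : ℕ)
    -- the tower of spaces and base points
    (X : ℕ → Type) (tX : ∀ n, TopologicalSpace (X n)) (z : ∀ n, X n)
    -- the open chains attached at each stage
    (k : ℕ → ℕ) (hk : ∀ n, n < M → 1 ≤ k n)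
    (lam : ∀ n, Fin (k n) → ℝ) (hlam : ∀ n, n < M → ∀ i, 0 < lam n i)
    (Ψ : ∀ n, X n → EuclideanSpace ℝ (Fin d))
    (hΨ : ∀ n, n < M → Continuous (Ψ n))
    (u : ∀ n, Fin (k n) → EuclideanSpace ℝ (Fin d))
    (hu : ∀ n, n < M → ∀ i, ‖u n i‖ = 1)
    (hna : ∀ n, n < M → ¬ ∃ w : EuclideanSpace ℝ (Fin d), ‖w‖ = 1 ∧
      ∀ i, u n i = w ∨ u n i = -w)
    (hmatch : ∀ n, n < M → ∑ i, lam n i • u n i = Ψ n (z n))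
    -- `X (n+1)` is the fiber product of `X n` with the `n`-th open chain
    (step : ∀ n, n < M →
      (X (n + 1) ≃ₜ {p : X n × (Fin (k n) → EuclideanSpace ℝ (Fin d)) //
        (∀ i, ‖p.2 i‖ = 1) ∧ Ψ n p.1 = ∑ i, lam n i • p.2 i}))
    (hstep : ∀ n (hn : n < M), ((step n hn) (z (n + 1))).val = (z n, u n))
    -- the base point of `X 0` is locally a quadratic cone times a Euclidean space
    (p q e₀ : ℕ) (hp : 1 ≤ p) (hq : 1 ≤ q)
    (O : Set (EuclideanSpace ℝ (Fin p) × EuclideanSpace ℝ (Fin q)))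
    (hOQ : O ⊆ quadCone p q) (hOrel : ∃ O₁, IsOpen O₁ ∧ O = O₁ ∩ quadCone p q)
    (hO0 : (0 : EuclideanSpace ℝ (Fin p) × EuclideanSpace ℝ (Fin q)) ∈ O)
    (base : ∃ Nb0 : Set (X 0), IsOpen Nb0 ∧
      ∃ (hz0 : z 0 ∈ Nb0) (h0 : ↥Nb0 ≃ₜ ↥O × EuclideanSpace ℝ (Fin e₀)),
        h0 ⟨z 0, hz0⟩ = (⟨0, hO0⟩, 0)) :
    ∃ Nb : Set (X M), IsOpen Nb ∧
    ∃ O' : Set (EuclideanSpace ℝ (Fin p) × EuclideanSpace ℝ (Fin q)),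
      O' ⊆ quadCone p q ∧ (∃ O₁, IsOpen O₁ ∧ O' = O₁ ∩ quadCone p q) ∧
    ∃ (hO'0 : (0 : EuclideanSpace ℝ (Fin p) × EuclideanSpace ℝ (Fin q)) ∈ O')
      (hzM : z M ∈ Nb)
      (h : ↥Nb ≃ₜ ↥O' × EuclideanSpace ℝ
        (Fin (e₀ + ∑ n ∈ Finset.range M, (k n * (d - 1) - d)))),
      h ⟨z M, hzM⟩ = (⟨0, hO'0⟩, 0) := by
  have base' := (LocallyHomeomorphicAt.subtype_prod_iff (hOQ hO0)).2
    (base.imp fun _ ⟨hN, h⟩ => ⟨hN, O, hOQ, hOrel, hO0, h⟩)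
  exact (LocallyHomeomorphicAt.subtype_prod_iff (hOQ hO0)).1 <| stmt_12_general
    finrank_euclideanSpace_fin (fun n hn i => (hlam n hn i).ne') hΨ hna step hstep base'
end

section
/- Let p, q ≥ 2 and e ≥ 0 be integers, and let Q = {(x, y) ∈ ℝ^p × ℝ^q : ‖x‖² = ‖y‖²}. Then no open neighborhood of the point ((0, 0), 0) in Q × ℝ^e is homeomorphic to an open subset of ℝ^{p+q−1+e}; that is, the origin is a topological singularity of Q × ℝ^e. -/
/-!
Let `Q` be the cone `‖x‖ = ‖y‖` and let `u` be a unit vector. The projection `(x, y, c) ↦ (x, c)`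
from `Q × G` has the continuous section `(x, c) ↦ (x, ‖x‖ • u, c)`, and the only point of its fibre
over `0` is the singular point. In a chart of dimension larger than that of the base, an arbitrarily
small perturbation of the section over a ball misses the singular point, because the image of a
`C¹` map from a lower-dimensional space has dense complement. Composing the perturbed section with
the projection gives a map which is uniformly close to the identity of the ball but has no zero,
contradicting the no-retraction theorem.

The no-retraction theorem is proved by Milnor's volume argument: if `H` is `C¹` and fixes the sphere
pointwise, then `∫ det D(id + t • (H - id))` over the ball is a polynomial in `t`. For small `t > 0`
it is the volume of the ball, since `id + t • (H - id)` then maps the ball bijectively onto itself;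
so it is the volume for `t = 1` as well. But `det DH` vanishes identically if `H` takes its values
in the sphere.
-/

open Set Metric MeasureTheory Filter Topology Module Polynomial
open scoped RealInnerProductSpace

theorem image_eq_self_of_isPreconnected {X : Type*} [TopologicalSpace X] [T2Space X] {s : Set X}
    {f : X → X} (hs : IsPreconnected s) (hcpt : IsCompact (closure s))
    (hf : ContinuousOn f (closure s)) (hopen : IsOpen (f '' s)) (hmaps : MapsTo f s s)
    (hbdry : MapsTo f (closure s \ s) sᶜ) : f '' s = s := by
  refine hmaps.image_subset.antisymm ?_
  rcases s.eq_empty_or_nonempty with rfl | hne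
  · exact empty_subset _
  refine hs.subset_of_closure_inter_subset hopen ?_ ?_
  · rw [inter_eq_right.2 hmaps.image_subset]
    exact hne.image f
  rintro y ⟨hy, hys⟩
  obtain ⟨x, hx, rfl⟩ : y ∈ f '' closure s :=
    closure_minimal (image_mono subset_closure) (hcpt.image_of_continuousOn hf).isClosed hy
  by_contra hxs
  exact hbdry ⟨hx, fun h ↦ hxs (mem_image_of_mem f h)⟩ hys

section NormedSpace

variable {E : Type*} [NormedAddCommGroup E] [NormedSpace ℝ E]

theorem approximatesLinearOn_add_smul {K : NNReal} {v : E → E} {s : Set E}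
    (hv : LipschitzOnWith K v s) (t : ℝ) :
    ApproximatesLinearOn (fun x ↦ x + t • v x) (ContinuousLinearEquiv.refl ℝ E : E →L[ℝ] E) s
      (‖t‖₊ * K) := by
  refine LipschitzOnWith.approximatesLinearOn ?_
  convert! (lipschitzWith_smul t).comp_lipschitzOnWith hv using 1
  ext x
  simp

theorem eventually_forall_det_one_add_smul_pos {X : Type*} [TopologicalSpace X] {K : Set X}
    (hK : IsCompact K) {A : X → E →L[ℝ] E} (hA : Continuous A) :
    ∀ᶠ t in 𝓝 (0 : ℝ), ∀ x ∈ K, 0 < (1 + t • A x).det := by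
  refine hK.eventually_forall_of_forall_eventually fun x _ ↦ ?_
  have hcont : Continuous fun z : ℝ × X ↦ (1 + z.1 • A z.2).det :=
    ContinuousLinearMap.continuous_det.comp (by fun_prop)
  refine hcont.continuousAt.eventually_const_lt ?_
  simp [ContinuousLinearMap.det]

variable [FiniteDimensional ℝ E] {s : Set E} {H : E → E}

theorem bijOn_add_smul_sub_of_convex (hs : IsOpen s) (hconv : Convex ℝ s)
    (hbdd : Bornology.IsBounded s) {K : NNReal}
    (hH : LipschitzOnWith K (fun x ↦ H x - x) (closure s)) (hmaps : MapsTo H s (closure s))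
    (hbdry : EqOn H id (frontier s)) {t : ℝ} (ht0 : 0 < t) (ht1 : t < 1) (htK : ‖t‖₊ * K < 1) :
    BijOn (fun x ↦ x + t • (H x - x)) s s := by
  have happrox := (approximatesLinearOn_add_smul hH t).mono_set subset_closure
  have hsmall : Subsingleton E ∨
      ‖t‖₊ * K < ‖((ContinuousLinearEquiv.refl ℝ E).symm : E →L[ℝ] E)‖₊⁻¹ := by
    rcases subsingleton_or_nontrivial E with h | h
    · exact .inl h
    · exact .inr (by simpa using htK)
  have hmaps' : MapsTo (fun x ↦ x + t • (H x - x)) s s := by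
    intro x hx
    have hcombo := hconv.combo_interior_closure_mem_interior (hs.interior_eq.symm ▸ hx) (hmaps hx)
      (sub_pos.2 ht1) ht0.le (sub_add_cancel 1 t)
    rw [hs.interior_eq] at hcombo
    convert! hcombo using 1
    module
  have hbdry' : MapsTo (fun x ↦ x + t • (H x - x)) (closure s \ s) sᶜ := by
    rintro x hx
    have hHx : H x = x := hbdry (hs.frontier_eq ▸ hx)
    simpa [hHx] using hx.2
  have himage : (fun x ↦ x + t • (H x - x)) '' s = s :=
    image_eq_self_of_isPreconnected hconv.isPreconnected hbdd.isCompact_closure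
      (approximatesLinearOn_add_smul hH t).continuousOn
      (happrox.toOpenPartialHomeomorph _ s hsmall hs).open_target hmaps' hbdry'
  exact ⟨mapsTo_iff_image_subset.2 himage.subset, happrox.injOn hsmall, himage.superset⟩

end NormedSpace

theorem exists_polynomial_eval_eq_integral {α 𝕜 : Type*} [MeasurableSpace α] {μ : Measure α}
    [RCLike 𝕜] {n : ℕ} (P : α → 𝕜[X]) (hdeg : ∀ x, (P x).natDegree ≤ n)
    (hint : ∀ t, Integrable (fun x ↦ (P x).eval t) μ) :
    ∃ Q : 𝕜[X], ∀ t, Q.eval t = ∫ x, (P x).eval t ∂μ := by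
  let nodes := Finset.range (n + 1)
  refine ⟨Lagrange.interpolate nodes (Nat.cast : ℕ → 𝕜) fun i ↦ ∫ x, (P x).eval (i : 𝕜) ∂μ,
    fun t ↦ ?_⟩
  have hP (x) : (P x).eval t =
      ∑ i ∈ nodes, (P x).eval (i : 𝕜) * (Lagrange.basis nodes Nat.cast i).eval t := by
    have hlt : (P x).degree < nodes.card := by
      rw [Finset.card_range]
      exact degree_le_natDegree.trans_lt (mod_cast Nat.lt_succ_of_le (hdeg x))
    conv_lhs => rw [Lagrange.eq_interpolate (Nat.cast_injective (R := 𝕜)).injOn hlt]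
    simp [Lagrange.interpolate_apply, eval_finsetSum]
  rw [integral_congr_ae (.of_forall hP), integral_finsetSum _ fun (i : ℕ) _ ↦ (hint i).mul_const _]
  simp [Lagrange.interpolate_apply, eval_finsetSum, integral_mul_const]

theorem exists_polynomial_eval_eq_det_one_add_smul {R M : Type*} [CommRing R] [Nontrivial R]
    [AddCommGroup M] [Module R M] [Module.Free R M] [Module.Finite R M] (A : M →ₗ[R] M) :
    ∃ P : R[X], P.natDegree ≤ finrank R M ∧ ∀ t, P.eval t = (1 + t • A).det := by
  let b := finBasis R M
  let B := LinearMap.toMatrix b b A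
  refine ⟨((X : R[X]) • B.map C + (1 : Matrix _ _ R).map C).det, ?_, fun t ↦ ?_⟩
  · simpa using natDegree_det_X_add_C_le B 1
  · have hdet : (1 + t • A).det = (t • B + 1).det := by
      rw [← LinearMap.det_toMatrix b, add_comm, map_add, map_smul]
      congr
      exact LinearMap.toMatrix_one b
    rw [hdet, ← coe_evalRingHom, RingHom.map_det]
    congr 1
    ext i j
    by_cases hij : i = j <;> simp [hij, mul_comm t]

section Integral

variable {E : Type*} [NormedAddCommGroup E] [NormedSpace ℝ E] [FiniteDimensional ℝ E]
  [MeasurableSpace E] [BorelSpace E] {μ : Measure E} [μ.IsAddHaarMeasure] {s : Set E} {H : E → E}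

theorem eventually_setIntegral_det_fderiv_eq (hs : IsOpen s) (hconv : Convex ℝ s)
    (hbdd : Bornology.IsBounded s) (hH : ContDiff ℝ 1 H) (hmaps : MapsTo H s (closure s))
    (hbdry : EqOn H id (frontier s)) :
    ∀ᶠ t in 𝓝[>] (0 : ℝ), ∫ x in s, (1 + t • (fderiv ℝ H x - 1)).det ∂μ = μ.real s := by
  have hcpt : IsCompact (closure s) := hbdd.isCompact_closure
  obtain ⟨K, hK⟩ : ∃ K, LipschitzOnWith K (fun x ↦ H x - x) (closure s) :=
    (hH.sub contDiff_id).locallyLipschitz.locallyLipschitzOn.exists_lipschitzOnWith_of_compact hcpt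
  have hsmall : ∀ᶠ t : ℝ in 𝓝 0, ‖t‖₊ * K < 1 :=
    Continuous.tendsto' (by fun_prop) _ 0 (by simp) |>.eventually_lt_const one_pos
  have hdet : ∀ᶠ t in 𝓝 (0 : ℝ), ∀ x ∈ closure s, 0 < (1 + t • (fderiv ℝ H x - 1)).det :=
    eventually_forall_det_one_add_smul_pos hcpt
      ((hH.continuous_fderiv one_ne_zero).sub continuous_const)
  filter_upwards [hsmall.filter_mono nhdsWithin_le_nhds, hdet.filter_mono nhdsWithin_le_nhds,
    Ioo_mem_nhdsGT one_pos] with t htK hpos ⟨ht0, ht1⟩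
  have hbij := bijOn_add_smul_sub_of_convex hs hconv hbdd hK hmaps hbdry ht0 ht1 htK
  have hderiv (x) (_ : x ∈ s) : HasFDerivWithinAt (fun x ↦ x + t • (H x - x))
      (1 + t • (fderiv ℝ H x - 1)) s x :=
    ((hasFDerivAt_id x).add
      (((hH.differentiable one_ne_zero x).hasFDerivAt.sub (hasFDerivAt_id x)).const_smul
        t)).hasFDerivWithinAt
  calc ∫ x in s, (1 + t • (fderiv ℝ H x - 1)).det ∂μ
      = ∫ x in s, |(1 + t • (fderiv ℝ H x - 1)).det| • (1 : ℝ) ∂μ :=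
        setIntegral_congr_fun hs.measurableSet fun x hx ↦ by
          simp [abs_of_pos (hpos x (subset_closure hx))]
    _ = ∫ _ in (fun x ↦ x + t • (H x - x)) '' s, (1 : ℝ) ∂μ :=
        (integral_image_eq_integral_abs_det_fderiv_smul μ hs.measurableSet hderiv hbij.injOn
          fun _ ↦ 1).symm
    _ = μ.real s := by simp [hbij.image_eq]

theorem setIntegral_det_fderiv_eq_measureReal (hs : IsOpen s) (hconv : Convex ℝ s)
    (hbdd : Bornology.IsBounded s) (hH : ContDiff ℝ 1 H) (hmaps : MapsTo H s (closure s))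
    (hbdry : EqOn H id (frontier s)) :
    ∫ x in s, (fderiv ℝ H x).det ∂μ = μ.real s := by
  choose P hdeg hP using fun x ↦
    exists_polynomial_eval_eq_det_one_add_smul (fderiv ℝ H x - 1 : E →ₗ[ℝ] E)
  have hP' (x) (t : ℝ) : (P x).eval t = (1 + t • (fderiv ℝ H x - 1)).det := hP x t
  have hint (t : ℝ) : IntegrableOn (fun x ↦ (P x).eval t) s μ := by
    have hcont : Continuous fun x ↦ (1 + t • (fderiv ℝ H x - 1)).det :=
      ContinuousLinearMap.continuous_det.comp
        (((hH.continuous_fderiv one_ne_zero).sub continuous_const).const_smul t |>.const_add 1)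
    simp only [hP']
    exact (hcont.continuousOn.integrableOn_compact hbdd.isCompact_closure).mono_set subset_closure
  obtain ⟨Q, hQ⟩ := exists_polynomial_eval_eq_integral P hdeg hint
  have hQC : Q = C (μ.real s) := by
    obtain ⟨ε, hε, hεQ⟩ := mem_nhdsGT_iff_exists_Ioo_subset.1
      (eventually_setIntegral_det_fderiv_eq (μ := μ) hs hconv hbdd hH hmaps hbdry)
    refine Q.eq_of_infinite_eval_eq _ ((Ioo_infinite hε).mono fun t ht ↦ ?_)
    simpa [hQ, hP'] using hεQ ht
  calc ∫ x in s, (fderiv ℝ H x).det ∂μ = Q.eval 1 := by simp [hQ, hP']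
    _ = μ.real s := by simp [hQC]

end Integral

section InnerProductSpace

variable {E : Type*} [NormedAddCommGroup E] [InnerProductSpace ℝ E]

variable [FiniteDimensional ℝ E] {R : ℝ}

theorem det_eq_zero_of_hasFDerivAt_of_norm_eq {H : E → E} {H' : E →L[ℝ] E} {x : E}
    (hH : HasFDerivAt H H' x) (hnorm : ∀ᶠ y in 𝓝 x, ‖H y‖ = ‖H x‖) (hx : H x ≠ 0) :
    H'.det = 0 := by
  have hconst : (fun y ↦ ‖H y‖ ^ 2) =ᶠ[𝓝 x] fun _ ↦ ‖H x‖ ^ 2 := hnorm.mono fun y hy ↦ by simp [hy]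
  have horth (z : E) : ⟪H x, H' z⟫ = 0 := by
    simpa using DFunLike.congr_fun
      (hH.norm_sq.unique ((hasFDerivAt_const _ _).congr_of_eventuallyEq hconst)) z
  by_contra hdet
  have hunit : IsUnit (H' : E →ₗ[ℝ] E) :=
    (LinearMap.isUnit_iff_isUnit_det _).2 (isUnit_iff_ne_zero.2 hdet)
  obtain ⟨z, hz⟩ := LinearMap.range_eq_top.1 ((LinearMap.isUnit_iff_range_eq_top _).1 hunit) (H x)
  have hz : H' z = H x := hz
  simpa [hz, hx] using horth z

theorem exists_norm_ne_of_eqOn_sphere {H : E → E} (hH : ContDiff ℝ 1 H) (hR : 0 < R)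
    (hsphere : EqOn H id (sphere 0 R)) : ∃ x, ‖H x‖ ≠ R := by
  borelize E
  by_contra! hnorm
  have hdet (x) : (fderiv ℝ H x).det = 0 :=
    det_eq_zero_of_hasFDerivAt_of_norm_eq (hH.differentiable one_ne_zero x).hasFDerivAt
      (.of_forall fun y ↦ by rw [hnorm, hnorm]) (norm_ne_zero_iff.1 (by rw [hnorm]; exact hR.ne'))
  have hvol : ∫ x in ball 0 R, (fderiv ℝ H x).det = volume.real (ball (0 : E) R) :=
    setIntegral_det_fderiv_eq_measureReal isOpen_ball (convex_ball _ _) isBounded_ball hH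
      (fun x _ ↦ by simp [closure_ball _ hR.ne', hnorm]) (by rwa [frontier_ball _ hR.ne'])
  have hpos : 0 < volume.real (ball (0 : E) R) :=
    ENNReal.toReal_pos (measure_ball_pos _ _ hR).ne' measure_ball_lt_top.ne
  simp [hdet, hpos.ne] at hvol

theorem exists_eq_zero_of_contDiff_of_eqOn_sphere {G : E → E} (hG : ContDiff ℝ 1 G) (hR : 0 < R)
    (hsphere : EqOn G id (sphere 0 R)) : ∃ x, G x = 0 := by
  by_contra! hne
  obtain ⟨x, hx⟩ := exists_norm_ne_of_eqOn_sphere (H := fun x ↦ (R / ‖G x‖) • G x)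
    ((contDiff_const.div (hG.norm ℝ hne) fun x ↦ norm_ne_zero_iff.2 (hne x)).smul hG) hR
    fun x hx ↦ by simp [hsphere hx, mem_sphere_zero_iff_norm.1 hx, hR.ne']
  exact hx (by simp [norm_smul, abs_of_pos hR, hne x])

end InnerProductSpace

section RadialRetraction

variable {E : Type*} [NormedAddCommGroup E] [NormedSpace ℝ E] {R : ℝ}

/-- The radial retraction of a real normed space onto its closed ball of radius `R > 0` around the
origin. -/
noncomputable def radialRetraction (R : ℝ) (x : E) : E := (R / max R ‖x‖) • x

theorem continuous_radialRetraction (hR : 0 < R) : Continuous (radialRetraction R : E → E) :=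
  (continuous_const.div (by fun_prop) fun _ ↦ (lt_max_of_lt_left hR).ne').smul continuous_id

theorem radialRetraction_of_mem {x : E} (hR : 0 < R) (hx : x ∈ closedBall 0 R) :
    radialRetraction R x = x := by
  rw [mem_closedBall_zero_iff] at hx
  simp [radialRetraction, max_eq_left hx, hR.ne']

theorem radialRetraction_of_le_norm {x : E} (hx : R ≤ ‖x‖) :
    radialRetraction R x = (R / ‖x‖) • x := by
  rw [radialRetraction, max_eq_right hx]

theorem radialRetraction_mem_closedBall (hR : 0 < R) (x : E) :
    radialRetraction R x ∈ closedBall 0 R := by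
  have hmax : 0 < max R ‖x‖ := lt_max_of_lt_left hR
  rw [mem_closedBall_zero_iff, radialRetraction, norm_smul, Real.norm_of_nonneg (by positivity),
    div_mul_eq_mul_div, div_le_iff₀ hmax]
  gcongr
  exact le_max_right _ _

end RadialRetraction

section AcuteAngle

variable {E : Type*} [NormedAddCommGroup E] [InnerProductSpace ℝ E] [FiniteDimensional ℝ E] {R : ℝ}

theorem exists_eq_zero_of_continuous_of_eqOn_compl_ball {G : E → E} (hR : 0 < R) (hG : Continuous G)
    (hout : EqOn G id (ball 0 R)ᶜ) : ∃ x, G x = 0 := by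
  by_contra! hne
  obtain ⟨K, hK, hKG, hKout, -⟩ := hG.exists_contDiff_approx_and_eqOn 1 hG.norm
    (fun x ↦ norm_pos_iff.2 (hne x)) (isOpen_ball (x := (0 : E)) (ε := R + 1)).isClosed_compl
    (isClosed_closedBall.isOpen_compl.mem_nhdsSet.2 <|
      compl_subset_compl.2 (closedBall_subset_ball (lt_add_one R)))
    (contDiff_id.contDiffOn.congr fun x hx ↦ hout fun h ↦ hx (ball_subset_closedBall h))
  obtain ⟨x, hx⟩ := exists_eq_zero_of_contDiff_of_eqOn_sphere hK (add_pos hR one_pos)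
    fun x hx ↦ (hKout (by simp [mem_sphere_zero_iff_norm.1 hx])).trans
      (hout (by simp [mem_sphere_zero_iff_norm.1 hx]))
  simpa [hx] using hKG x

theorem exists_eq_zero_of_forall_inner_pos {g : E → E} (hR : 0 < R)
    (hg : ContinuousOn g (closedBall 0 R)) (hpos : ∀ x ∈ sphere 0 R, 0 < ⟪g x, x⟫) :
    ∃ x ∈ closedBall 0 R, g x = 0 := by
  by_contra! hne
  let χ : ContDiffBump (0 : E) := ⟨R, 2 * R, hR, by linarith⟩
  let ρ : E → E := radialRetraction R
  have hρ : Continuous ρ := continuous_radialRetraction hR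
  have hgρ : Continuous (g ∘ ρ) := hg.comp_continuous hρ (radialRetraction_mem_closedBall hR)
  obtain ⟨x, hx⟩ := exists_eq_zero_of_continuous_of_eqOn_compl_ball (R := 2 * R)
    (G := fun x ↦ χ x • g (ρ x) + (1 - χ x) • x) (by positivity)
    ((χ.continuous.smul hgρ).add ((continuous_const.sub χ.continuous).smul continuous_id))
    fun x hx ↦ by simp [χ.zero_of_le_dist (by simpa using hx : 2 * R ≤ dist x 0)]
  rcases le_or_gt ‖x‖ R with hxR | hxR
  · have hmem : x ∈ closedBall 0 R := mem_closedBall_zero_iff.2 hxR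
    apply hne x hmem
    simpa [χ.one_of_mem_closedBall hmem, ρ, radialRetraction_of_mem hR hmem] using hx
  · have hx0 : 0 < ‖x‖ := hR.trans hxR
    have hgx : 0 < ⟪g (ρ x), x⟫ := by
      have hρx : ρ x = (R / ‖x‖) • x := radialRetraction_of_le_norm hxR.le
      have := hpos (ρ x) (by simp [hρx, norm_smul, abs_of_pos hR, hx0.ne'])
      rw [hρx, real_inner_smul_right, ← hρx] at this
      exact pos_of_mul_pos_right this (by positivity)
    have hinner : χ x * ⟪g (ρ x), x⟫ + (1 - χ x) * ‖x‖ ^ 2 = 0 := by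
      simpa [inner_add_left, real_inner_smul_left] using congrArg (⟪·, x⟫) hx
    exact (convex_Ioi (0 : ℝ) hgx (pow_pos hx0 2) χ.nonneg (sub_nonneg.2 χ.le_one)
      (add_sub_cancel _ _)).ne' hinner

theorem exists_eq_zero_of_forall_norm_sub_lt {g : E → E} (hR : 0 < R)
    (hg : ContinuousOn g (closedBall 0 R)) (hnear : ∀ x ∈ sphere 0 R, ‖g x - x‖ < R) :
    ∃ x ∈ closedBall 0 R, g x = 0 := by
  refine exists_eq_zero_of_forall_inner_pos hR hg fun x hx ↦ ?_
  have hxR : ‖x‖ = R := mem_sphere_zero_iff_norm.1 hx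
  have hsplit : ⟪g x, x⟫ = ⟪g x - x, x⟫ + R ^ 2 := by
    rw [inner_sub_left, real_inner_self_eq_norm_sq, hxR, sub_add_cancel]
  have hbound : -(‖g x - x‖ * R) ≤ ⟪g x - x, x⟫ := by
    simpa [hxR] using neg_le_of_abs_le (abs_real_inner_le_norm (g x - x) x)
  nlinarith [hnear x hx]

end AcuteAngle

section Retract

variable {E F : Type*} [NormedAddCommGroup E] [NormedAddCommGroup F] [NormedSpace ℝ F]
  [FiniteDimensional ℝ F]

theorem exists_continuous_dist_lt_forall_ne [NormedSpace ℝ E] [FiniteDimensional ℝ E]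
    (hEF : finrank ℝ E < finrank ℝ F) {f : E → F} (hf : Continuous f) (w : F) {δ : ℝ}
    (hδ : 0 < δ) : ∃ h : E → F, Continuous h ∧ (∀ x, dist (h x) (f x) < δ) ∧ ∀ x, h x ≠ w := by
  obtain ⟨k, hk, hkf, -⟩ := hf.exists_contDiff_approx 1 (ε := fun _ ↦ δ / 2)
    continuous_const fun _ ↦ half_pos hδ
  obtain ⟨z, hz, hzw⟩ :=
    (hk.dense_compl_range_of_finrank_lt_finrank hEF).exists_dist_lt w (half_pos hδ)
  refine ⟨fun x ↦ k x + (w - z), hk.continuous.add continuous_const, fun x ↦ ?_, fun x hx ↦ ?_⟩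
  · calc dist (k x + (w - z)) (f x) ≤ dist (k x + (w - z)) (k x) + dist (k x) (f x) :=
          dist_triangle _ _ _
      _ < δ / 2 + δ / 2 := by gcongr; exacts [by simpa [dist_eq_norm] using hzw, hkf x]
      _ = δ := add_halves δ
  · have hx : k x + (w - z) = w := hx
    exact hz ⟨x, by simpa [← add_sub_assoc, sub_eq_iff_eq_add, add_comm w] using hx⟩

theorem exists_ne_eq_zero_of_leftInvOn [InnerProductSpace ℝ E] [FiniteDimensional ℝ E]
    (hEF : finrank ℝ E < finrank ℝ F) {R : ℝ} (hR : 0 < R) {W : Set F} (hW : IsOpen W) {f : E → F}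
    {k : F → E} (hf : ContinuousOn f (closedBall 0 R)) (hfW : MapsTo f (closedBall 0 R) W)
    (hk : ContinuousOn k W) (hkf : LeftInvOn k f (closedBall 0 R)) (w₀ : F) :
    ∃ w ∈ W, w ≠ w₀ ∧ k w = 0 := by
  let f' : E → F := f ∘ radialRetraction R
  have hf' : Continuous f' := hf.comp_continuous (continuous_radialRetraction hR)
    (radialRetraction_mem_closedBall hR)
  have hcpt : IsCompact (f '' closedBall 0 R) := (isCompact_closedBall 0 R).image_of_continuousOn hf
  obtain ⟨δ₁, hδ₁, hkδ₁⟩ := Metric.mem_uniformity_dist.1 <|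
    hcpt.uniformContinuousAt_of_continuousAt k
      (fun w hw ↦ hk.continuousAt (hW.mem_nhds (hfW.image_subset hw))) (dist_mem_uniformity hR)
  obtain ⟨δ₂, hδ₂, hWδ₂⟩ := hcpt.exists_thickening_subset_open hW hfW.image_subset
  obtain ⟨h, hh, hhf', hhne⟩ :=
    exists_continuous_dist_lt_forall_ne hEF hf' w₀ (lt_min hδ₁ hδ₂)
  have hhf (x) (hx : x ∈ closedBall 0 R) : dist (h x) (f x) < min δ₁ δ₂ := by
    simpa [f', radialRetraction_of_mem hR hx] using hhf' x
  have hhW : MapsTo h (closedBall 0 R) W := fun x hx ↦ hWδ₂ <|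
    mem_thickening_iff.2 ⟨f x, mem_image_of_mem f hx, (hhf x hx).trans_le (min_le_right _ _)⟩
  obtain ⟨x, hx, hx0⟩ := exists_eq_zero_of_forall_norm_sub_lt hR (hk.comp hh.continuousOn hhW)
    fun x hx ↦ by
      have hxR := sphere_subset_closedBall hx
      have hclose : dist (k (f x)) (k (h x)) < R :=
        hkδ₁ (by rw [dist_comm]; exact (hhf x hxR).trans_le (min_le_left _ _))
          (mem_image_of_mem f hxR)
      rwa [hkf hxR, dist_comm, dist_eq_norm] at hclose
  exact ⟨h x, hhW hx, hhne x, hx0⟩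

theorem exists_openPartialHomeomorph_source_eq {X Y : Type*} [TopologicalSpace X]
    [TopologicalSpace Y] {U : Set X} {W : Set Y} (hU : IsOpen U) (hW : IsOpen W) (hne : U.Nonempty)
    (Φ : U ≃ₜ W) : ∃ φ : OpenPartialHomeomorph X Y, φ.source = U := by
  have : Nonempty U := hne.to_subtype
  let φU : OpenPartialHomeomorph U X := hU.isOpenEmbedding_subtypeVal.toOpenPartialHomeomorph _
  let φW : OpenPartialHomeomorph U Y :=
    (hW.isOpenEmbedding_subtypeVal.comp Φ.isOpenEmbedding).toOpenPartialHomeomorph _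
  exact ⟨φU.symm.trans φW, by simp [φU, φW]⟩

theorem notMem_source_of_retract [NormedSpace ℝ E] [FiniteDimensional ℝ E] {X : Type*}
    [TopologicalSpace X] (hEF : finrank ℝ E < finrank ℝ F) {i : E → X} {r : X → E}
    (hi : Continuous i) (hr : Continuous r) (hri : Function.LeftInverse r i)
    (hfiber : ∀ x, r x = 0 → x = i 0) (φ : OpenPartialHomeomorph X F) : i 0 ∉ φ.source := by
  intro hmem
  let e : E ≃L[ℝ] EuclideanSpace ℝ (Fin (finrank ℝ E)) := toEuclidean
  have hnhds : i ∘ e.symm ⁻¹' φ.source ∈ 𝓝 0 :=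
    (φ.open_source.preimage (hi.comp e.symm.continuous)).mem_nhds (by simpa using hmem)
  obtain ⟨R, hR, hball⟩ := nhds_basis_closedBall.mem_iff.1 hnhds
  obtain ⟨w, hw, hne, hzero⟩ := exists_ne_eq_zero_of_leftInvOn (by simpa using hEF) hR φ.open_target
    (f := φ ∘ i ∘ e.symm) (k := e ∘ r ∘ φ.symm)
    (φ.continuousOn.comp (hi.comp e.symm.continuous).continuousOn hball)
    (fun x hx ↦ φ.map_source (hball hx))
    ((e.continuous.comp hr).comp_continuousOn φ.continuousOn_symm)
    (fun x hx ↦ by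
      have hφ : φ.symm (φ (i (e.symm x))) = i (e.symm x) := φ.left_inv (hball hx)
      simp [hφ, hri _])
    (φ (i 0))
  refine hne ?_
  rw [← hfiber (φ.symm w) (by simpa using hzero), φ.right_inv hw]

end Retract

theorem stmt_13_general {E V G F : Type*} [NormedAddCommGroup E] [NormedSpace ℝ E]
    [FiniteDimensional ℝ E] [NormedAddCommGroup V] [NormedSpace ℝ V] [Nontrivial V]
    [NormedAddCommGroup G] [NormedSpace ℝ G] [FiniteDimensional ℝ G]
    [NormedAddCommGroup F] [NormedSpace ℝ F] [FiniteDimensional ℝ F]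
    (hF : finrank ℝ E + finrank ℝ G < finrank ℝ F) :
    ¬ ∃ U : Set ({z : E × V // ‖z.1‖ ^ 2 = ‖z.2‖ ^ 2} × G),
        IsOpen U ∧ (⟨⟨0, by simp⟩, 0⟩ : {z : E × V // ‖z.1‖ ^ 2 = ‖z.2‖ ^ 2} × G) ∈ U ∧
        ∃ W : Set F, IsOpen W ∧ Nonempty (U ≃ₜ W) := by
  rintro ⟨U, hU, h0, W, hW, ⟨Φ⟩⟩
  obtain ⟨u, hu⟩ := exists_norm_eq V zero_le_one
  let i (z : E × G) : {z : E × V // ‖z.1‖ ^ 2 = ‖z.2‖ ^ 2} × G :=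
    (⟨(z.1, ‖z.1‖ • u), by simp [norm_smul, hu]⟩, z.2)
  let r (z : {z : E × V // ‖z.1‖ ^ 2 = ‖z.2‖ ^ 2} × G) : E × G := (z.1.1.1, z.2)
  have hfiber (z) (hz : r z = 0) : z = i 0 := by
    obtain ⟨⟨⟨x, y⟩, hxy⟩, c⟩ := z
    obtain ⟨rfl, rfl⟩ := Prod.mk.inj hz
    obtain rfl : y = 0 := by simpa [eq_comm] using hxy
    simp [i]
  obtain ⟨φ, rfl⟩ := exists_openPartialHomeomorph_source_eq hU hW ⟨_, h0⟩ Φ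
  refine notMem_source_of_retract (by simpa using hF) (i := i) (r := r) (by fun_prop) (by fun_prop)
    (fun z ↦ rfl) hfiber φ ?_
  convert! h0
  simp

theorem stmt_13 (p q e : ℕ) (hp : 2 ≤ p) (hq : 2 ≤ q) :
    ¬ ∃ U : Set ({z : EuclideanSpace ℝ (Fin p) × EuclideanSpace ℝ (Fin q) //
          ‖z.1‖ ^ 2 = ‖z.2‖ ^ 2} × EuclideanSpace ℝ (Fin e)),
        IsOpen U ∧
        (⟨⟨0, by simp⟩, 0⟩ : {z : EuclideanSpace ℝ (Fin p) × EuclideanSpace ℝ (Fin q) //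
          ‖z.1‖ ^ 2 = ‖z.2‖ ^ 2} × EuclideanSpace ℝ (Fin e)) ∈ U ∧
        ∃ W : Set (EuclideanSpace ℝ (Fin (p + q - 1 + e))),
          IsOpen W ∧ Nonempty (↥U ≃ₜ ↥W) := by
  have : Nontrivial (EuclideanSpace ℝ (Fin q)) :=
    Module.nontrivial_of_finrank_pos (R := ℝ) (by simp; omega)
  exact stmt_13_general (by simp; omega)
end

section
/- Let ℓ₁, ℓ₂, ℓ₃, ℓ₄ > 0 satisfy ℓ₁ − ℓ₂ + ℓ₃ = ℓ₄, and suppose that (1, −1, 1) is the unique sign vector ε ∈ {−1, 1}³ with ε₁ℓ₁ + ε₂ℓ₂ + ε₃ℓ₃ = ℓ₄. Then the reduced configuration space of the planar closed 4-chain, Ĉ = {(u₁, u₂, u₃) ∈ (S¹)³ : ℓ₁u₁ + ℓ₂u₂ + ℓ₃u₃ = ℓ₄ • e₁} (where S¹ is the unit circle in ℝ² and e₁ = (1, 0)), is homeomorphic to a wedge of two circles, i.e. to {z ∈ ℂ : |z − 1| = 1 or |z + 1| = 1}. -/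
/-!
Since vector addition commutes, the closing condition can be read as `l₁ u₁ + l₃ u₃ = l₄ - l₂ u₂`.
Put `x = -u₂` and `y = u₁⁻¹ u₃`. The law of cosines computes the squared length of both sides, and
because `l₁ + l₃ = l₂ + l₄` the outcome is `l₄ l₂ (1 - Re x) = l₁ l₃ (1 - Re y)`. Conversely the two
sides never vanish when `l₄ l₂ ≠ l₁ l₃`, so a solution `(x, y)` determines `u₁`.

The configuration space is thus the curve `α (1 - Re x) = β (1 - Re y)` on the torus, and by
symmetry one may take `0 < α < β`. Then `x` is arbitrary, `y` is determined up to conjugation, and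
the two choices of `y` agree only over `x = 1`: two copies of the circle, glued at one point.
-/

open Complex

theorem nonempty_homeomorph_of_isCompact_of_bijOn {X Y : Type*} [TopologicalSpace X]
    [TopologicalSpace Y] [T2Space Y] {f : X → Y} {s : Set X} {t : Set Y} (hs : IsCompact s)
    (hf : ContinuousOn f s) (hbij : Set.BijOn f s t) : Nonempty (s ≃ₜ t) := by
  have : CompactSpace s := isCompact_iff_compactSpace.mp hs
  have hhomeo : IsHomeomorph hbij.mapsTo.restrict :=
    isHomeomorph_iff_continuous_bijective.mpr ⟨hf.mapsToRestrict hbij.mapsTo, hbij.bijective⟩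
  exact ⟨hhomeo.homeomorph⟩

theorem circle_re_sq_add_im_sq (z : Circle) : (z : ℂ).re ^ 2 + (z : ℂ).im ^ 2 = 1 := by
  simpa only [normSq_apply, ← sq] using Circle.normSq_coe z

theorem circle_re_le_one (z : Circle) : (z : ℂ).re ≤ 1 := by
  simpa only [Circle.norm_coe] using re_le_norm (z : ℂ)

theorem circle_neg_one_le_re (z : Circle) : -1 ≤ (z : ℂ).re :=
  (abs_le.mp ((abs_re_le_norm (z : ℂ)).trans_eq z.norm_coe)).1

theorem circle_re_eq_one_iff {z : Circle} : (z : ℂ).re = 1 ↔ z = 1 := by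
  refine ⟨fun hre => Circle.ext (Complex.ext hre ?_), fun h => by simp [h]⟩
  simpa [hre] using circle_re_sq_add_im_sq z

theorem circle_ext_of_re_eq_of_im_nonneg_iff {z w : Circle} (hre : (z : ℂ).re = (w : ℂ).re)
    (him : 0 ≤ (z : ℂ).im ↔ 0 ≤ (w : ℂ).im) : z = w := by
  have hsq : (z : ℂ).im ^ 2 = (w : ℂ).im ^ 2 := by
    have hz := circle_re_sq_add_im_sq z
    rw [hre] at hz
    linarith [circle_re_sq_add_im_sq w]
  refine Circle.ext (Complex.ext hre ?_)
  rcases sq_eq_sq_iff_eq_or_eq_neg.mp hsq with h | h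
  · exact h
  · by_cases hz : 0 ≤ (z : ℂ).im
    · linarith [him.mp hz]
    · linarith [not_le.mp hz, not_le.mp (mt him.mpr hz)]

theorem exists_circle_re_eq_and_im_nonneg {r : ℝ} (h₁ : -1 ≤ r) (h₂ : r ≤ 1) :
    ∃ z : Circle, (z : ℂ).re = r ∧ 0 ≤ (z : ℂ).im := by
  refine ⟨Circle.exp (Real.arccos r), ?_, ?_⟩
  · rw [Circle.coe_exp, exp_ofReal_mul_I_re, Real.cos_arccos h₁ h₂]
  · rw [Circle.coe_exp, exp_ofReal_mul_I_im, Real.sin_arccos]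
    exact Real.sqrt_nonneg _

/-- The curve on the torus formed by the pairs `(exp (θ * I), exp (φ * I))` whose versines
`1 - cos θ` and `1 - cos φ` are in the ratio `β : α`. -/
def versineCurve (α β : ℝ) : Set (Circle × Circle) :=
  {p | α * (1 - (p.1 : ℂ).re) = β * (1 - (p.2 : ℂ).re)}

theorem mem_versineCurve {α β : ℝ} {p : Circle × Circle} :
    p ∈ versineCurve α β ↔ α * (1 - (p.1 : ℂ).re) = β * (1 - (p.2 : ℂ).re) :=
  Iff.rfl

/-- The wedge of two circles, as the union of two tangent unit circles in the plane. -/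
def figureEight : Set ℂ :=
  {z | ‖z - 1‖ = 1 ∨ ‖z + 1‖ = 1}

/-- The map which, on `versineCurve α β` with `0 < α < β`, sends the half `0 ≤ Im y` onto the right
circle of the figure eight and the half `Im y ≤ 0` onto the left one. -/
noncomputable def versineToFigureEight (p : Circle × Circle) : ℂ :=
  if 0 ≤ (p.2 : ℂ).im then 1 - p.1 else p.1 - 1

theorem versineToFigureEight_mem (p : Circle × Circle) : versineToFigureEight p ∈ figureEight := by
  unfold versineToFigureEight figureEight
  split_ifs
  · left; simp [Circle.norm_coe]
  · right; simp [Circle.norm_coe]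

theorem isClosed_versineCurve (α β : ℝ) : IsClosed (versineCurve α β) :=
  isClosed_eq (by fun_prop) (by fun_prop)

theorem inv_snd_mem_versineCurve {α β : ℝ} {x y : Circle} (h : (x, y) ∈ versineCurve α β) :
    (x, y⁻¹) ∈ versineCurve α β := by
  simpa only [mem_versineCurve, Circle.coe_inv_eq_conj, conj_re] using h

/-- The symmetry exchanging the two angles, by which the smaller coefficient can be put first. -/
noncomputable def versineCurveSwap (α β : ℝ) : versineCurve α β ≃ₜ versineCurve β α :=
  (Homeomorph.prodComm Circle Circle).subtype fun _ => eq_comm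

section VersineCurve

variable {α β : ℝ} {p : Circle × Circle}

theorem fst_eq_one_of_snd_im_eq_zero (hα : 0 < α) (hαβ : α < β) (hp : p ∈ versineCurve α β)
    (him : (p.2 : ℂ).im = 0) : p.1 = 1 := by
  have hcurve := mem_versineCurve.mp hp
  have hre : (p.2 : ℂ).re = 1 ∨ (p.2 : ℂ).re = -1 := by
    simpa [him] using circle_re_sq_add_im_sq p.2
  rw [← circle_re_eq_one_iff]
  rcases hre with h | h
  · rw [h, sub_self, mul_zero] at hcurve
    linarith [(mul_eq_zero.mp hcurve).resolve_left hα.ne']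
  · -- Here `α * (1 - Re x) = 2 * β`, although `1 - Re x ≤ 2`.
    rw [h] at hcurve
    nlinarith [circle_neg_one_le_re p.1]

theorem snd_eq_one_of_fst_eq_one (hβ : β ≠ 0) (hp : p ∈ versineCurve α β) (h : p.1 = 1) :
    p.2 = 1 := by
  have hcurve := mem_versineCurve.mp hp
  rw [h, Circle.coe_one, one_re, sub_self, mul_zero, eq_comm, mul_eq_zero] at hcurve
  rw [← circle_re_eq_one_iff]
  linarith [hcurve.resolve_left hβ]

theorem versineToFigureEight_of_im_nonneg (h : 0 ≤ (p.2 : ℂ).im) :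
    versineToFigureEight p = 1 - p.1 :=
  if_pos h

theorem versineToFigureEight_of_im_nonpos (hα : 0 < α) (hαβ : α < β) (hp : p ∈ versineCurve α β)
    (h : (p.2 : ℂ).im ≤ 0) : versineToFigureEight p = p.1 - 1 := by
  rcases h.lt_or_eq with h | h
  · exact if_neg h.not_ge
  · rw [versineToFigureEight_of_im_nonneg h.ge, fst_eq_one_of_snd_im_eq_zero hα hαβ hp h]
    simp

theorem re_versineToFigureEight_nonneg_iff (hβ : β ≠ 0) (hp : p ∈ versineCurve α β) :
    0 ≤ (versineToFigureEight p).re ↔ 0 ≤ (p.2 : ℂ).im := by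
  unfold versineToFigureEight
  split_ifs with him
  · simpa [him] using circle_re_le_one p.1
  · have hne : (p.1 : ℂ).re ≠ 1 := fun h =>
      him (by simp [snd_eq_one_of_fst_eq_one hβ hp (circle_re_eq_one_iff.mp h)])
    simpa [him] using (circle_re_le_one p.1).lt_of_ne hne

theorem versineToFigureEight_injOn (hβ : β ≠ 0) :
    Set.InjOn versineToFigureEight (versineCurve α β) := by
  intro p hp q hq hpq
  have him : 0 ≤ (p.2 : ℂ).im ↔ 0 ≤ (q.2 : ℂ).im := by
    rw [← re_versineToFigureEight_nonneg_iff hβ hp, hpq, re_versineToFigureEight_nonneg_iff hβ hq]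
  have hfst : p.1 = q.1 := by
    unfold versineToFigureEight at hpq
    simp only [him] at hpq
    split_ifs at hpq <;> simpa [Circle.coe_inj] using hpq
  have hre : (p.2 : ℂ).re = (q.2 : ℂ).re := by
    have hcurve : β * (1 - (p.2 : ℂ).re) = β * (1 - (q.2 : ℂ).re) := by
      rw [← mem_versineCurve.mp hp, ← mem_versineCurve.mp hq, hfst]
    linarith [mul_left_cancel₀ hβ hcurve]
  exact Prod.ext hfst (circle_ext_of_re_eq_of_im_nonneg_iff hre him)

theorem exists_mem_versineCurve_im_nonneg (hα : 0 < α) (hαβ : α < β) (x : Circle) :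
    ∃ y, (x, y) ∈ versineCurve α β ∧ 0 ≤ (y : ℂ).im := by
  have hβ : 0 < β := hα.trans hαβ
  have hx₀ : 0 ≤ 1 - (x : ℂ).re := sub_nonneg.mpr (circle_re_le_one x)
  have hx₂ : 1 - (x : ℂ).re ≤ 2 := by linarith [circle_neg_one_le_re x]
  have hversine_nonneg : 0 ≤ α * (1 - (x : ℂ).re) / β := by positivity
  have hversine_le : α * (1 - (x : ℂ).re) / β ≤ 2 := by
    rw [div_le_iff₀ hβ]
    nlinarith
  obtain ⟨y, hre, him⟩ := exists_circle_re_eq_and_im_nonneg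
    (r := 1 - α * (1 - (x : ℂ).re) / β) (by linarith) (by linarith)
  refine ⟨y, ?_, him⟩
  rw [mem_versineCurve, hre]
  field_simp
  ring

theorem versineToFigureEight_surjOn (hα : 0 < α) (hαβ : α < β) :
    Set.SurjOn versineToFigureEight (versineCurve α β) figureEight := by
  rintro z (hz | hz)
  · let x : Circle := ⟨1 - z, mem_sphere_zero_iff_norm.mpr (by rwa [norm_sub_rev])⟩
    obtain ⟨y, hxy, him⟩ := exists_mem_versineCurve_im_nonneg hα hαβ x
    refine ⟨(x, y), hxy, ?_⟩
    rw [versineToFigureEight_of_im_nonneg him]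
    exact sub_sub_cancel 1 z
  · let x : Circle := ⟨z + 1, mem_sphere_zero_iff_norm.mpr hz⟩
    obtain ⟨y, hxy, him⟩ := exists_mem_versineCurve_im_nonneg hα hαβ x
    have hxy' := inv_snd_mem_versineCurve hxy
    refine ⟨(x, y⁻¹), hxy', ?_⟩
    rw [versineToFigureEight_of_im_nonpos hα hαβ hxy' (by simpa [Circle.coe_inv_eq_conj] using him)]
    exact add_sub_cancel_right z 1

theorem versineToFigureEight_continuousOn (hα : 0 < α) (hαβ : α < β) :
    ContinuousOn versineToFigureEight (versineCurve α β) := by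
  rw [continuousOn_iff_continuous_domRestrict]
  refine Continuous.if_le (by fun_prop) (by fun_prop) continuous_const (by fun_prop) ?_
  rintro ⟨p, hp⟩ him
  simp [fst_eq_one_of_snd_im_eq_zero hα hαβ hp him.symm]

theorem nonempty_versineCurve_homeomorph_figureEight_of_lt (hα : 0 < α) (hαβ : α < β) :
    Nonempty (versineCurve α β ≃ₜ figureEight) := by
  have hbij : Set.BijOn versineToFigureEight (versineCurve α β) figureEight :=
    ⟨fun p _ => versineToFigureEight_mem p, versineToFigureEight_injOn (hα.trans hαβ).ne',
      versineToFigureEight_surjOn hα hαβ⟩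
  exact nonempty_homeomorph_of_isCompact_of_bijOn (isClosed_versineCurve α β).isCompact
    (versineToFigureEight_continuousOn hα hαβ) hbij

theorem nonempty_versineCurve_homeomorph_figureEight (hα : 0 < α) (hβ : 0 < β) (hne : α ≠ β) :
    Nonempty (versineCurve α β ≃ₜ figureEight) := by
  rcases hne.lt_or_gt with h | h
  · exact nonempty_versineCurve_homeomorph_figureEight_of_lt hα h
  · exact (nonempty_versineCurve_homeomorph_figureEight_of_lt hβ h).map (versineCurveSwap α β).trans

end VersineCurve

section LawOfCosines

variable {a b c d : ℝ} {x y : Circle}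

theorem normSq_ofReal_add_ofReal_mul_circle (a b : ℝ) (x : Circle) :
    normSq (a + b * x) = (a + b) ^ 2 - 2 * (a * b * (1 - (x : ℂ).re)) := by
  simp only [normSq_apply, add_re, add_im, ofReal_re, ofReal_im, re_ofReal_mul, im_ofReal_mul]
  linear_combination b ^ 2 * circle_re_sq_add_im_sq x

theorem mem_versineCurve_iff_norm_eq_norm (hsum : a + b = c + d) :
    (x, y) ∈ versineCurve (a * b) (c * d) ↔ ‖(a + b * x : ℂ)‖ = ‖(c + d * y : ℂ)‖ := by
  rw [← sq_eq_sq₀ (norm_nonneg _) (norm_nonneg _), ← normSq_eq_norm_sq, ← normSq_eq_norm_sq,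
    normSq_ofReal_add_ofReal_mul_circle, normSq_ofReal_add_ofReal_mul_circle, hsum,
    mem_versineCurve]
  constructor <;> intro h <;> linarith

theorem eq_of_ofReal_add_ofReal_mul_circle_eq_zero (hab : a + b ≠ 0)
    (h : (a + b * x : ℂ) = 0) : a = b := by
  have hnorm : ‖(a : ℂ)‖ = ‖(b : ℂ)‖ := by
    rw [eq_neg_of_add_eq_zero_left h, norm_neg, norm_mul, Circle.norm_coe, mul_one]
  rw [norm_real, norm_real, Real.norm_eq_abs, Real.norm_eq_abs, abs_eq_abs] at hnorm
  exact hnorm.resolve_right fun h => hab (by rw [h, neg_add_cancel])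

theorem ofReal_add_ofReal_mul_circle_ne_zero (hsum : a + b = c + d) (hne : a + b ≠ 0)
    (hprod : a * b ≠ c * d) (h : (x, y) ∈ versineCurve (a * b) (c * d)) :
    (c + d * y : ℂ) ≠ 0 := by
  intro hcd
  have hab : (a + b * x : ℂ) = 0 := by
    rw [← norm_eq_zero, (mem_versineCurve_iff_norm_eq_norm hsum).mp h, hcd, norm_zero]
  obtain rfl := eq_of_ofReal_add_ofReal_mul_circle_eq_zero hne hab
  obtain rfl := eq_of_ofReal_add_ofReal_mul_circle_eq_zero (hsum ▸ hne) hcd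
  exact hprod (by rw [show a = c by linarith])

end LawOfCosines

/-- The reduced configuration space of the planar closed 4-chain, with the plane identified with `ℂ`
and `e₁` with `1`. -/
def linkage (l₁ l₂ l₃ l₄ : ℝ) : Set (Fin 3 → Circle) :=
  {u | (l₁ * u 0 + l₂ * u 1 + l₃ * u 2 : ℂ) = l₄}

theorem mem_linkage {l₁ l₂ l₃ l₄ : ℝ} {u : Fin 3 → Circle} :
    u ∈ linkage l₁ l₂ l₃ l₄ ↔ (l₁ * u 0 + l₂ * u 1 + l₃ * u 2 : ℂ) = l₄ :=
  Iff.rfl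

/-- The pair of relative directions: of the second link to the reversed fixed one, and of the third
link to the first. -/
noncomputable def linkageAngles (u : Fin 3 → Circle) : Circle × Circle :=
  (-u 1, (u 0)⁻¹ * u 2)

section Linkage

variable {l₁ l₂ l₃ l₄ : ℝ} {u : Fin 3 → Circle}

theorem isClosed_linkage (l₁ l₂ l₃ l₄ : ℝ) : IsClosed (linkage l₁ l₂ l₃ l₄) :=
  isClosed_eq (by fun_prop) continuous_const

theorem mem_linkage_iff_linkageAngles :
    u ∈ linkage l₁ l₂ l₃ l₄ ↔
      (u 0 * (l₁ + l₃ * (linkageAngles u).2) : ℂ) = l₄ + l₂ * (linkageAngles u).1 := by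
  have hdiag : (u 0 * (l₁ + l₃ * (linkageAngles u).2) : ℂ) = l₁ * u 0 + l₃ * u 2 := by
    simp only [linkageAngles, Circle.coe_mul, Circle.coe_inv]
    field_simp [(u 0).coe_ne_zero]
  rw [mem_linkage, hdiag, linkageAngles, Circle.coe_neg]
  constructor <;> intro h <;> linear_combination h

theorem linkageAngles_mapsTo (hsum : l₄ + l₂ = l₁ + l₃) :
    Set.MapsTo linkageAngles (linkage l₁ l₂ l₃ l₄) (versineCurve (l₄ * l₂) (l₁ * l₃)) := by
  intro u hu
  rw [← Prod.mk.eta (p := linkageAngles u), mem_versineCurve_iff_norm_eq_norm hsum,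
    ← mem_linkage_iff_linkageAngles.mp hu, norm_mul, Circle.norm_coe, one_mul]

theorem linkageAngles_injOn (hsum : l₄ + l₂ = l₁ + l₃) (hne : l₄ + l₂ ≠ 0)
    (hprod : l₄ * l₂ ≠ l₁ * l₃) : Set.InjOn linkageAngles (linkage l₁ l₂ l₃ l₄) := by
  intro u hu v hv huv
  have hdiag : (l₁ + l₃ * (linkageAngles u).2 : ℂ) ≠ 0 :=
    ofReal_add_ofReal_mul_circle_ne_zero hsum hne hprod (linkageAngles_mapsTo hsum hu)
  have h0 : u 0 = v 0 := by
    refine Circle.ext (mul_right_cancel₀ hdiag ?_)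
    rw [mem_linkage_iff_linkageAngles.mp hu, huv, mem_linkage_iff_linkageAngles.mp hv]
  have h1 : u 1 = v 1 := neg_injective (congrArg Prod.fst huv)
  have h2 : (u 0)⁻¹ * u 2 = (v 0)⁻¹ * v 2 := congrArg Prod.snd huv
  rw [h0] at h2
  funext i
  fin_cases i
  exacts [h0, h1, mul_left_cancel h2]

theorem linkageAngles_surjOn (hsum : l₄ + l₂ = l₁ + l₃) (hne : l₄ + l₂ ≠ 0)
    (hprod : l₄ * l₂ ≠ l₁ * l₃) :
    Set.SurjOn linkageAngles (linkage l₁ l₂ l₃ l₄) (versineCurve (l₄ * l₂) (l₁ * l₃)) := by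
  rintro ⟨x, y⟩ hxy
  have hdiag : (l₁ + l₃ * y : ℂ) ≠ 0 := ofReal_add_ofReal_mul_circle_ne_zero hsum hne hprod hxy
  have hnorm : ‖(l₄ + l₂ * x : ℂ) / (l₁ + l₃ * y)‖ = 1 := by
    rw [norm_div, (mem_versineCurve_iff_norm_eq_norm hsum).mp hxy,
      div_self (norm_ne_zero_iff.mpr hdiag)]
  let w : Circle := ⟨(l₄ + l₂ * x) / (l₁ + l₃ * y), mem_sphere_zero_iff_norm.mpr hnorm⟩
  have hangles : linkageAngles ![w, -x, w * y] = (x, y) := by simp [linkageAngles]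
  refine ⟨![w, -x, w * y], ?_, hangles⟩
  rw [mem_linkage_iff_linkageAngles, hangles]
  exact div_mul_cancel₀ _ hdiag

theorem nonempty_linkage_homeomorph_versineCurve (hsum : l₄ + l₂ = l₁ + l₃) (hne : l₄ + l₂ ≠ 0)
    (hprod : l₄ * l₂ ≠ l₁ * l₃) :
    Nonempty (linkage l₁ l₂ l₃ l₄ ≃ₜ versineCurve (l₄ * l₂) (l₁ * l₃)) := by
  have hcont : Continuous linkageAngles := by
    unfold linkageAngles
    fun_prop
  have hbij : Set.BijOn linkageAngles (linkage l₁ l₂ l₃ l₄) (versineCurve (l₄ * l₂) (l₁ * l₃)) :=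
    ⟨linkageAngles_mapsTo hsum, linkageAngles_injOn hsum hne hprod,
      linkageAngles_surjOn hsum hne hprod⟩
  exact nonempty_homeomorph_of_isCompact_of_bijOn (isClosed_linkage l₁ l₂ l₃ l₄).isCompact
    hcont.continuousOn hbij

theorem mem_linkage_iff_map {E : Type*} [NormedAddCommGroup E] [NormedSpace ℝ E] (e : ℂ ≃ₗᵢ[ℝ] E) :
    u ∈ linkage l₁ l₂ l₃ l₄ ↔ l₁ • e (u 0) + l₂ • e (u 1) + l₃ • e (u 2) = l₄ • e 1 := by
  simp only [mem_linkage, ← map_smul, ← map_add, e.injective.eq_iff, real_smul, mul_one]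

end Linkage

/-- The configuration space in a Euclidean plane `E` in terms of unit complex numbers, for a choice
of orthonormal coordinates `e` on `E`. -/
noncomputable def configurationHomeomorphLinkage {E : Type*} [NormedAddCommGroup E]
    [NormedSpace ℝ E] (e : ℂ ≃ₗᵢ[ℝ] E) (l₁ l₂ l₃ l₄ : ℝ) :
    {u : Fin 3 → E // (∀ i, ‖u i‖ = 1) ∧ l₁ • u 0 + l₂ • u 1 + l₃ • u 2 = l₄ • e 1} ≃ₜ
      linkage l₁ l₂ l₃ l₄ where
  toFun u := ⟨fun i => ⟨e.symm (u.1 i), mem_sphere_zero_iff_norm.mpr (by simp [u.2.1 i])⟩,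
    (mem_linkage_iff_map e).mpr (by simpa using u.2.2)⟩
  invFun w := ⟨fun i => e (w.1 i), fun i => by simp [Circle.norm_coe],
    (mem_linkage_iff_map e).mp w.2⟩
  left_inv u := by simp
  right_inv w := by
    ext i
    simp
  continuous_toFun :=
    Continuous.subtype_mk (continuous_pi fun i => Continuous.subtype_mk
      (e.symm.continuous.comp ((continuous_apply i).comp continuous_subtype_val)) _) _
  continuous_invFun := by
    have hcoe : Continuous ((↑) : Circle → ℂ) := by fun_prop
    exact Continuous.subtype_mk (continuous_pi fun i => e.continuous.comp
      (hcoe.comp ((continuous_apply i).comp continuous_subtype_val))) _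

theorem orthonormalBasisOneI_repr_one :
    orthonormalBasisOneI.repr 1 = EuclideanSpace.single (0 : Fin 2) (1 : ℝ) := by
  simpa using orthonormalBasisOneI.repr_self 0

theorem ne_of_unique_aligned {l₁ l₂ l₃ l₄ : ℝ} (hdeg : l₁ - l₂ + l₃ = l₄)
    (huniq : ∀ ε : Fin 3 → ℝ, (∀ i, ε i = 1 ∨ ε i = -1) →
      ε 0 * l₁ + ε 1 * l₂ + ε 2 * l₃ = l₄ → ε 0 = 1 ∧ ε 1 = -1 ∧ ε 2 = 1) :
    l₁ ≠ l₂ ∧ l₃ ≠ l₂ := by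
  constructor
  · rintro rfl
    have h := huniq ![-1, 1, 1] (by simp [Fin.forall_fin_succ]) (by simpa using hdeg)
    norm_num at h
  · rintro rfl
    have h := huniq ![1, 1, -1] (by simp [Fin.forall_fin_succ]) (by simpa using hdeg)
    norm_num at h

theorem stmt_14 (l₁ l₂ l₃ l₄ : ℝ)
    (h1 : 0 < l₁) (h2 : 0 < l₂) (h3 : 0 < l₃) (h4 : 0 < l₄)
    (hdeg : l₁ - l₂ + l₃ = l₄)
    (huniq : ∀ ε : Fin 3 → ℝ, (∀ i, ε i = 1 ∨ ε i = -1) →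
      ε 0 * l₁ + ε 1 * l₂ + ε 2 * l₃ = l₄ →
      ε 0 = 1 ∧ ε 1 = -1 ∧ ε 2 = 1) :
    Nonempty
      ({u : Fin 3 → EuclideanSpace ℝ (Fin 2) //
          (∀ i, ‖u i‖ = 1) ∧
          l₁ • u 0 + l₂ • u 1 + l₃ • u 2 =
            l₄ • (EuclideanSpace.single (0 : Fin 2) (1 : ℝ))} ≃ₜ
        {z : ℂ // ‖z - 1‖ = 1 ∨ ‖z + 1‖ = 1}) := by
  obtain ⟨h₁₂, h₃₂⟩ := ne_of_unique_aligned hdeg huniq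
  have hprod : l₄ * l₂ ≠ l₁ * l₃ := by
    have hfactor : l₄ * l₂ - l₁ * l₃ = -((l₁ - l₂) * (l₃ - l₂)) := by rw [← hdeg]; ring
    rw [← sub_ne_zero, hfactor]
    exact neg_ne_zero.mpr (mul_ne_zero (sub_ne_zero.mpr h₁₂) (sub_ne_zero.mpr h₃₂))
  obtain ⟨linkageToCurve⟩ := nonempty_linkage_homeomorph_versineCurve
    (by linarith) (add_pos h4 h2).ne' hprod
  obtain ⟨curveToFigureEight⟩ := nonempty_versineCurve_homeomorph_figureEight
    (mul_pos h4 h2) (mul_pos h1 h3) hprod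
  rw [← orthonormalBasisOneI_repr_one]
  exact ⟨(configurationHomeomorphLinkage orthonormalBasisOneI.repr l₁ l₂ l₃ l₄).trans
    (linkageToCurve.trans curveToFigureEight)⟩
end

section
/- Let ℓ, m, c, a be real numbers with ℓ > 0, m > 0, a > 0, c ≠ 0, and let ρ, s, t : ℝ → ℝ be functions differentiable at φ₀ which satisfy, for all φ in a neighborhood of φ₀: (i) (ℓ + s(φ))·cos φ = c − (m + t(φ))·cos(ρ(φ)); (ii) (ℓ + s(φ))·sin φ = (m + t(φ))·sin(ρ(φ)); (iii) (c − m·cos(ρ(φ)) − ℓ·cos φ)² + (m·sin(ρ(φ)) − ℓ·sin φ)² = a². Assume s(φ₀) ≠ 0, ℓ + s(φ₀) ≠ 0, m + t(φ₀) ≠ 0, and sin(ρ(φ₀)) ≠ 0. Then the derivative at φ₀ of φ ↦ cos(ρ(φ)) equals (ℓ·t(φ₀) / (m·s(φ₀))) · sin(ρ(φ₀)); equivalently, ρ'(φ₀) = −ℓ·t(φ₀) / (m·s(φ₀)). -/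
open Real Filter

/-!
Let `A = l (cos φ, sin φ)` and `B = (c - m cos r, m sin r)` be the endpoints of the two segments,
starting at the origin and at `(c, 0)`, and `z` the point where the lines carrying them meet.
Rigidity keeps `F (φ, r) = |B - A|²` constant, so the implicit function theorem gives
`ρ' = -(∂F/∂φ) / (∂F/∂r)`. Write `B - A = (z - A) - (z - B)`, a difference of vectors of signed
lengths `s` and `t` along the two lines. Each endpoint moves perpendicularly to its own line, hence
only the vector along the other line contributes to each partial derivative, and these are
`2 l t sin (φ + r)` and `2 m s sin (φ + r)`. The law of sines in the triangle with vertices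
`(0, 0)`, `(c, 0)` and `z` shows that the common factor `sin (φ + r)` does not vanish.
-/

section ImplicitDifferentiation

variable {𝕜 : Type*} [NontriviallyNormedField 𝕜]
  {E₁ : Type*} [NormedAddCommGroup E₁] [NormedSpace 𝕜 E₁] [CompleteSpace E₁]
  {E₂ : Type*} [NormedAddCommGroup E₂] [NormedSpace 𝕜 E₂] [CompleteSpace E₂]
  {F : Type*} [NormedAddCommGroup F] [NormedSpace 𝕜 F] [CompleteSpace F]

theorem hasStrictFDerivAt_of_eventually_apply_eq {f : E₁ × E₂ → F} {f' : E₁ × E₂ →L[𝕜] F}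
    {g : E₁ → E₂} {x : E₁} {y : F} (hf : HasStrictFDerivAt f f' (x, g x))
    (hf' : (f' ∘L .inr 𝕜 E₁ E₂).IsInvertible) (hg : ContinuousAt g x)
    (hfg : ∀ᶠ x' in nhds x, f (x', g x') = y) :
    HasStrictFDerivAt g (-(f' ∘L .inr 𝕜 E₁ E₂).inverse ∘L (f' ∘L .inl 𝕜 E₁ E₂)) x := by
  refine (hf.hasStrictFDerivAt_implicitFunctionOfProdDomain hf').congr_of_eventuallyEq ?_
  have graph_tendsto : Tendsto (fun x' ↦ (x', g x')) (nhds x) (nhds (x, g x)) :=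
    continuousAt_id.prodMk hg
  filter_upwards [hfg, graph_tendsto.eventually
    (hf.eventually_apply_eq_iff_implicitFunctionOfProdDomain hf')] with x' hx' apply_eq_iff
  exact apply_eq_iff.mp (hx'.trans hfg.self_of_nhds.symm)

theorem hasStrictDerivAt_of_eventually_apply_eq [CompleteSpace 𝕜] {f : 𝕜 × 𝕜 → 𝕜}
    {g : 𝕜 → 𝕜} {a b x y : 𝕜}
    (hf : HasStrictFDerivAt f (a • .fst 𝕜 𝕜 𝕜 + b • .snd 𝕜 𝕜 𝕜) (x, g x)) (hb : b ≠ 0)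
    (hg : ContinuousAt g x) (hfg : ∀ᶠ x' in nhds x, f (x', g x') = y) :
    HasStrictDerivAt g (-a / b) x := by
  have snd_partial : (a • .fst 𝕜 𝕜 𝕜 + b • .snd 𝕜 𝕜 𝕜) ∘L .inr 𝕜 𝕜 𝕜 =
      (ContinuousLinearEquiv.unitsEquivAut 𝕜 (Units.mk0 b hb) : 𝕜 →L[𝕜] 𝕜) := by
    ext; simp
  have hg' := hasStrictFDerivAt_of_eventually_apply_eq hf ⟨_, snd_partial.symm⟩ hg hfg
  refine hg'.hasStrictDerivAt.congr_deriv ?_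
  rw [snd_partial, ContinuousLinearMap.inverse_equiv]
  simp [div_eq_mul_inv]

end ImplicitDifferentiation

/-- The squared distance between the branch endpoints `l (cos φ, sin φ)` and
`(c - m cos r, m sin r)` of the planar linkage, as a function of the pair `(φ, r)` of base angles;
the rigidity constraint says that it is constant. -/
noncomputable def endpointDistSq (l m c : ℝ) (p : ℝ × ℝ) : ℝ :=
  (c - m * cos p.2 - l * cos p.1) ^ 2 + (m * sin p.2 - l * sin p.1) ^ 2

theorem hasStrictFDerivAt_endpointDistSq (l m c : ℝ) (p : ℝ × ℝ) :
    HasStrictFDerivAt (endpointDistSq l m c)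
      ((2 * l * ((c - m * cos p.2 - l * cos p.1) * sin p.1 -
          (m * sin p.2 - l * sin p.1) * cos p.1)) • .fst ℝ ℝ ℝ +
        (2 * m * ((c - m * cos p.2 - l * cos p.1) * sin p.2 +
          (m * sin p.2 - l * sin p.1) * cos p.2)) • .snd ℝ ℝ ℝ) p := by
  have hφ : HasStrictFDerivAt Prod.fst (.fst ℝ ℝ ℝ) p := hasStrictFDerivAt_fst
  have hr : HasStrictFDerivAt Prod.snd (.snd ℝ ℝ ℝ) p := hasStrictFDerivAt_snd
  have hX := ((hr.cos.const_mul m).const_sub c).sub (hφ.cos.const_mul l)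
  have hY := (hr.sin.const_mul m).sub (hφ.sin.const_mul l)
  refine ((hX.pow 2).add (hY.pow 2)).congr_fderiv ?_
  simp only [Pi.sub_apply, Nat.reduceSub, pow_one]
  module

section LoopClosure

variable {l m c φ r s t : ℝ}

theorem mul_sin_add_of_loop_closure {p q : ℝ} (hcos : p * cos φ = c - q * cos r)
    (hsin : p * sin φ = q * sin r) : p * sin (φ + r) = c * sin r := by
  rw [sin_add]
  linear_combination sin r * hcos + cos r * hsin

theorem sin_add_ne_zero_of_loop_closure {p q : ℝ} (hc : c ≠ 0) (hr : sin r ≠ 0)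
    (hcos : p * cos φ = c - q * cos r) (hsin : p * sin φ = q * sin r) : sin (φ + r) ≠ 0 :=
  right_ne_zero_of_mul (mul_sin_add_of_loop_closure hcos hsin ▸ mul_ne_zero hc hr)

theorem hasStrictFDerivAt_endpointDistSq_of_loop_closure
    (hcos : (l + s) * cos φ = c - (m + t) * cos r) (hsin : (l + s) * sin φ = (m + t) * sin r) :
    HasStrictFDerivAt (endpointDistSq l m c)
      ((2 * l * t * sin (φ + r)) • .fst ℝ ℝ ℝ + (2 * m * s * sin (φ + r)) • .snd ℝ ℝ ℝ)
      (φ, r) := by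
  have hX : c - m * cos r - l * cos φ = s * cos φ + t * cos r := by linear_combination -hcos
  have hY : m * sin r - l * sin φ = s * sin φ - t * sin r := by linear_combination -hsin
  refine (hasStrictFDerivAt_endpointDistSq l m c (φ, r)).congr_fderiv ?_
  rw [hX, hY, sin_add]
  congr 2 <;> ring

end LoopClosure

theorem stmt_15_general {l m c d φ₀ s t : ℝ} {ρ : ℝ → ℝ} (hm : m ≠ 0) (hs : s ≠ 0)
    (hρ : ContinuousAt ρ φ₀)
    (h1 : (l + s) * cos φ₀ = c - (m + t) * cos (ρ φ₀))
    (h2 : (l + s) * sin φ₀ = (m + t) * sin (ρ φ₀))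
    (h3 : ∀ᶠ φ in nhds φ₀,
      (c - m * cos (ρ φ) - l * cos φ) ^ 2 + (m * sin (ρ φ) - l * sin φ) ^ 2 = d)
    (hsin : sin (φ₀ + ρ φ₀) ≠ 0) :
    HasStrictDerivAt ρ (-(l * t) / (m * s)) φ₀ := by
  have hb : 2 * m * s * sin (φ₀ + ρ φ₀) ≠ 0 := by positivity
  refine (hasStrictDerivAt_of_eventually_apply_eq
    (hasStrictFDerivAt_endpointDistSq_of_loop_closure h1 h2) hb hρ h3).congr_deriv ?_
  field_simp

theorem stmt_15 (l m c a φ₀ : ℝ)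
    (hl : 0 < l) (hm : 0 < m) (ha : 0 < a) (hc : c ≠ 0)
    (ρ s t : ℝ → ℝ)
    (hρ : DifferentiableAt ℝ ρ φ₀) (hs : DifferentiableAt ℝ s φ₀)
    (ht : DifferentiableAt ℝ t φ₀)
    (h1 : ∀ᶠ φ in nhds φ₀, (l + s φ) * Real.cos φ = c - (m + t φ) * Real.cos (ρ φ))
    (h2 : ∀ᶠ φ in nhds φ₀, (l + s φ) * Real.sin φ = (m + t φ) * Real.sin (ρ φ))
    (h3 : ∀ᶠ φ in nhds φ₀,
      (c - m * Real.cos (ρ φ) - l * Real.cos φ) ^ 2 +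
        (m * Real.sin (ρ φ) - l * Real.sin φ) ^ 2 = a ^ 2)
    (hs0 : s φ₀ ≠ 0) (hls : l + s φ₀ ≠ 0) (hmt : m + t φ₀ ≠ 0)
    (hsin : Real.sin (ρ φ₀) ≠ 0) :
    deriv (fun φ => Real.cos (ρ φ)) φ₀ = (l * t φ₀ / (m * s φ₀)) * Real.sin (ρ φ₀) ∧
    deriv ρ φ₀ = -(l * t φ₀) / (m * s φ₀) := by
  have hρ' := (stmt_15_general hm.ne' hs0 hρ.continuousAt h1.self_of_nhds h2.self_of_nhds h3
    (sin_add_ne_zero_of_loop_closure hc hsin h1.self_of_nhds h2.self_of_nhds)).hasDerivAt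
  exact ⟨by rw [hρ'.cos.deriv]; ring, hρ'.deriv⟩
end

section
/- Let ℓ, m, c, a, γ be real numbers with ℓ > 0, m > 0, a > 0, c ≠ 0, and let ρ, s, t : ℝ → ℝ satisfy the hypotheses: ρ, s, t differentiable at φ₀; (i) (ℓ + s(φ))·cos φ = c − (m + t(φ))·cos(ρ(φ)); (ii) (ℓ + s(φ))·sin φ = (m + t(φ))·sin(ρ(φ)); (iii) (c − m·cos(ρ(φ)) − ℓ·cos φ)² + (m·sin(ρ(φ)) − ℓ·sin φ)² = a², for all φ near φ₀; with s(φ₀) ≠ 0, ℓ + s(φ₀) ≠ 0, m + t(φ₀) ≠ 0, sin(ρ(φ₀)) ≠ 0, and additionally sin(φ₀ + ρ(φ₀)) ≠ 0. Let ψ : ℝ → ℝ be differentiable at φ₀ and satisfy, for all φ near φ₀: a·cos(ψ(φ) − γ) = c − m·cos(ρ(φ)) − ℓ·cos φ and a·sin(ψ(φ) − γ) = m·sin(ρ(φ)) − ℓ·sin φ. Then ψ'(φ₀) = −ℓ / s(φ₀); equivalently, the derivative at φ₀ of φ ↦ cos(ψ(φ)) equals (ℓ / s(φ₀)) · sin(ψ(φ₀)).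 -/
open Real Filter

/-!
The meeting point `z` of the two direction lines is the instantaneous centre of rotation of the
moving triangle: each branch endpoint moves on a circle, hence perpendicularly to its line through
`z`. In complex notation, let `p = ℓ e^{iφ}` and `q = c - m e^{-iρ}` be the branch endpoints, so
that `q - p = s e^{iφ} + t e^{-iρ}` by way of `z`. Rigidity of the side `pq` gives
`q' - p' = i ψ' (q - p)`, that is `m ρ' e^{-iρ} - ℓ e^{iφ} = ψ' (s e^{iφ} + t e^{-iρ})`.
As `sin (φ + ρ) ≠ 0`, the two directions are independent over `ℝ`, and comparing the coefficients
of `e^{iφ}` yields `-ℓ = ψ' s`.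
-/

theorem circleMap_re (c : ℂ) (R θ : ℝ) : (circleMap c R θ).re = c.re + R * cos θ := by
  rw [circleMap, Complex.add_re, Complex.re_ofReal_mul, Complex.exp_ofReal_mul_I_re]

theorem circleMap_im (c : ℂ) (R θ : ℝ) : (circleMap c R θ).im = c.im + R * sin θ := by
  rw [circleMap, Complex.add_im, Complex.im_ofReal_mul, Complex.exp_ofReal_mul_I_im]

theorem linearIndependent_cexp_mul_I_pair {α β : ℝ} (h : sin (α - β) ≠ 0) :
    LinearIndependent ℝ ![Complex.exp (α * Complex.I), Complex.exp (β * Complex.I)] := by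
  rw [LinearIndependent.pair_iff]
  intro x y hxy
  have hcos : x * cos α + y * cos β = 0 := by
    simpa [Complex.exp_ofReal_mul_I_re] using congrArg Complex.re hxy
  have hsin : x * sin α + y * sin β = 0 := by
    simpa [Complex.exp_ofReal_mul_I_im] using congrArg Complex.im hxy
  rw [sin_sub] at h
  constructor
  · apply (mul_eq_zero_iff_right h).mp
    linear_combination cos β * hsin - sin β * hcos
  · apply (mul_eq_zero_iff_right h).mp
    linear_combination sin α * hcos - cos α * hsin

section PlanarMotion

variable {p q : ℝ → ℂ} {α β θ : ℝ → ℝ} {α' β' ω τ : ℝ}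

theorem hasDerivAt_circleMap_comp (c : ℂ) (R : ℝ) (hθ : HasDerivAt θ ω τ) :
    HasDerivAt (fun x ↦ circleMap c R (θ x)) (ω * Complex.I * circleMap 0 R (θ τ)) τ := by
  refine ((hasDerivAt_circleMap c R (θ τ)).scomp τ hθ).congr_deriv ?_
  rw [Complex.real_smul]
  ring

theorem velocity_sub_eq_of_rigid {p' q' : ℂ} {R : ℝ} (hp : HasDerivAt p p' τ)
    (hq : HasDerivAt q q' τ) (hθ : HasDerivAt θ ω τ)
    (hrigid : ∀ᶠ x in nhds τ, q x - p x = circleMap 0 R (θ x)) :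
    q' - p' = ω * Complex.I * (q τ - p τ) := by
  have hrot := (hasDerivAt_circleMap_comp 0 R hθ).congr_of_eventuallyEq hrigid
  rw [(hq.sub hp).unique hrot, hrigid.self_of_nhds]

/-- The velocities of `p` and `q` are perpendicular to the lines in the directions `u` and `v`,
which meet at the instantaneous centre of rotation. -/
theorem angularVelocity_mul_eq_of_instantaneousCenter {u v : ℂ} {x y s t R : ℝ}
    (hp : HasDerivAt p (x * Complex.I * u) τ) (hq : HasDerivAt q (y * Complex.I * v) τ)
    (hθ : HasDerivAt θ ω τ) (hrigid : ∀ᶠ x in nhds τ, q x - p x = circleMap 0 R (θ x))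
    (hcenter : p τ + s * u = q τ + t * v) (huv : LinearIndependent ℝ ![u, v]) :
    ω * s = -x ∧ ω * t = -y := by
  have hvel := velocity_sub_eq_of_rigid hp hq hθ hrigid
  have hdep : (ω * s + x) • u + (-(ω * t + y)) • v = 0 := by
    apply mul_left_cancel₀ Complex.I_ne_zero
    simp only [Complex.real_smul, Complex.ofReal_add, Complex.ofReal_neg, Complex.ofReal_mul]
    linear_combination ω * Complex.I * hcenter - hvel
  obtain ⟨hs, ht⟩ := LinearIndependent.pair_iff.mp huv _ _ hdep
  constructor <;> linarith

/-- The cranks, of lengths `r₁` and `r₂`, turn about the pivots `A` and `B`; `s` and `t` are the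
signed distances from their ends to the instantaneous centre of the coupler, of length `R`. -/
theorem angularVelocity_mul_eq_of_fourBarLinkage {A B : ℂ} {r₁ r₂ R s t : ℝ}
    (hα : HasDerivAt α α' τ) (hβ : HasDerivAt β β' τ) (hθ : HasDerivAt θ ω τ)
    (hcoupler : ∀ᶠ x in nhds τ,
      circleMap B r₂ (β x) - circleMap A r₁ (α x) = circleMap 0 R (θ x))
    (hcenter : circleMap A (r₁ + s) (α τ) = circleMap B (r₂ + t) (β τ))
    (hsin : sin (α τ - β τ) ≠ 0) :
    ω * s = -(r₁ * α') ∧ ω * t = -(r₂ * β') := by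
  have crank_velocity {χ : ℝ → ℝ} {χ' : ℝ} (hχ : HasDerivAt χ χ' τ) (C : ℂ) (r : ℝ) :
      HasDerivAt (fun x ↦ circleMap C r (χ x))
        ((r * χ' : ℝ) * Complex.I * Complex.exp (χ τ * Complex.I)) τ := by
    refine (hasDerivAt_circleMap_comp C r hχ).congr_deriv ?_
    rw [circleMap_zero, Complex.ofReal_mul]
    ring
  refine angularVelocity_mul_eq_of_instantaneousCenter (crank_velocity hα A r₁)
    (crank_velocity hβ B r₂) hθ hcoupler ?_ (linearIndependent_cexp_mul_I_pair hsin)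
  simp only [circleMap, Complex.ofReal_add] at hcenter ⊢
  linear_combination hcenter

end PlanarMotion

theorem stmt_16 (l m c a γ φ₀ : ℝ)
    (hl : 0 < l) (hm : 0 < m) (ha : 0 < a) (hc : c ≠ 0)
    (ρ s t : ℝ → ℝ)
    (hρ : DifferentiableAt ℝ ρ φ₀) (hs : DifferentiableAt ℝ s φ₀)
    (ht : DifferentiableAt ℝ t φ₀)
    (h1 : ∀ᶠ φ in nhds φ₀, (l + s φ) * Real.cos φ = c - (m + t φ) * Real.cos (ρ φ))
    (h2 : ∀ᶠ φ in nhds φ₀, (l + s φ) * Real.sin φ = (m + t φ) * Real.sin (ρ φ))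
    (h3 : ∀ᶠ φ in nhds φ₀,
      (c - m * Real.cos (ρ φ) - l * Real.cos φ) ^ 2 +
        (m * Real.sin (ρ φ) - l * Real.sin φ) ^ 2 = a ^ 2)
    (hs0 : s φ₀ ≠ 0) (hls : l + s φ₀ ≠ 0) (hmt : m + t φ₀ ≠ 0)
    (hsin : Real.sin (ρ φ₀) ≠ 0)
    (hsin' : Real.sin (φ₀ + ρ φ₀) ≠ 0)
    (ψ : ℝ → ℝ) (hψ : DifferentiableAt ℝ ψ φ₀)
    (h4 : ∀ᶠ φ in nhds φ₀,
      a * Real.cos (ψ φ - γ) = c - m * Real.cos (ρ φ) - l * Real.cos φ)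
    (h5 : ∀ᶠ φ in nhds φ₀,
      a * Real.sin (ψ φ - γ) = m * Real.sin (ρ φ) - l * Real.sin φ) :
    deriv ψ φ₀ = -l / s φ₀ ∧
    deriv (fun φ => Real.cos (ψ φ)) φ₀ = (l / s φ₀) * Real.sin (ψ φ₀) := by
  have hcoupler : ∀ᶠ φ in nhds φ₀,
      circleMap c m (π - ρ φ) - circleMap 0 l φ = circleMap 0 a (ψ φ - γ) := by
    filter_upwards [h4, h5] with φ hcos hsin
    apply Complex.ext
    · simpa [circleMap_re, ← sub_eq_add_neg] using hcos.symm
    · simpa [circleMap_im] using hsin.symm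
  have hcenter : circleMap 0 (l + s φ₀) φ₀ = circleMap c (m + t φ₀) (π - ρ φ₀) := by
    apply Complex.ext
    · simpa [circleMap_re, ← sub_eq_add_neg] using h1.self_of_nhds
    · simpa [circleMap_im] using h2.self_of_nhds
  have hdir : sin (φ₀ - (π - ρ φ₀)) ≠ 0 := by
    rwa [sub_sub_eq_add_sub, sin_sub_pi, neg_ne_zero]
  have hψs : deriv ψ φ₀ * s φ₀ = -(l * 1) :=
    (angularVelocity_mul_eq_of_fourBarLinkage (hasDerivAt_id φ₀) (hρ.hasDerivAt.const_sub π)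
      (hψ.hasDerivAt.sub_const γ) hcoupler hcenter hdir).1
  have hψ' : deriv ψ φ₀ = -l / s φ₀ := by
    rw [eq_div_iff hs0, hψs, mul_one]
  refine ⟨hψ', ?_⟩
  rw [hψ.hasDerivAt.cos.deriv, hψ']
  ring
end

section
/- Under the hypotheses of the two implicit-differentiation identities (ρ, s, t, ψ differentiable at φ₀ satisfying equations (i)–(iii) and the two ψ-equations near φ₀, with ℓ, m, a, b > 0, c ≠ 0, s(φ₀) ≠ 0, ℓ + s(φ₀) ≠ 0, m + t(φ₀) ≠ 0, sin(ρ(φ₀)) ≠ 0, sin(φ₀ + ρ(φ₀)) ≠ 0), fix a point x̄ = (x₀, y₀) ∈ ℝ² and define y(φ) = (ℓ·cos φ + b·cos(ψ(φ)), ℓ·sin φ + b·sin(ψ(φ))) and F(φ) = ‖y(φ) − x̄‖². Then F'(φ₀) = 0 if and only if the three points z := (ℓ + s(φ₀))·(cos φ₀, sin φ₀), y(φ₀), and x̄ are collinear, i.e. the determinant of the 2×2 matrix with columns z − y(φ₀) and y(φ₀) − x̄ vanishes. -/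
open Real Filter

/-!
Regard the moving triangle as a rigid body with angular velocity `ω = ψ'(φ₀)`. Its two branch
endpoints turn about `(0, 0)` and `(c, 0)` respectively, so their velocities are perpendicular to
the two direction lines, and the crossing point `z` of these lines is the instantaneous centre of
rotation of the body. Hence `y' = ω J (y - z)`, where `J` is the rotation by a right angle, and
`F' = 2 ⟪y - x̄, y'⟫ = -2 ω det (z - y, y - x̄)`. Finally `ω ≠ 0`, since the first branch endpoint
has nonzero velocity.
-/

open Module Topology

section OrientedPlane

variable {E : Type*} [NormedAddCommGroup E] [InnerProductSpace ℝ E] [Fact (finrank ℝ E = 2)]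
  (o : Orientation ℝ E (Fin 2))

/-- At time `x` the point `p` moves as if it were rotating about `z` with angular velocity `ω`:
its velocity is `ω` times the vector from `z` to `p x`, turned by a right angle. Thus `z` is an
instantaneous centre of rotation of any rigid body carrying `p` that has angular velocity `ω`. -/
def HasInstantRotationAt (p : ℝ → E) (ω : ℝ) (z : E) (x : ℝ) : Prop :=
  HasDerivAt p (ω • o.rightAngleRotation (p x - z)) x

variable {o} {p q : ℝ → E} {A B z w : E} {θ : ℝ → ℝ} {α β ω x : ℝ}

theorem hasDerivAt_rotation (hθ : HasDerivAt θ ω x) (w : E) :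
    HasDerivAt (fun t ↦ o.rotation (θ t) w)
      (ω • o.rightAngleRotation (o.rotation (θ x) w)) x := by
  simp only [Orientation.rotation_apply, Real.Angle.cos_coe, Real.Angle.sin_coe]
  refine ((hθ.cos.smul_const w).add
    (hθ.sin.smul_const (o.rightAngleRotation w))).congr_deriv ?_
  simp only [map_add, map_smul, Orientation.rightAngleRotation_rightAngleRotation]
  module

theorem hasInstantRotationAt_const (o : Orientation ℝ E (Fin 2)) (A : E) (ω x : ℝ) :
    HasInstantRotationAt o (fun _ ↦ A) ω A x := by
  simpa [HasInstantRotationAt] using hasDerivAt_const x A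

namespace HasInstantRotationAt

theorem add_rotation (hp : HasInstantRotationAt o p ω z x) (hθ : HasDerivAt θ ω x) (w : E) :
    HasInstantRotationAt o (fun t ↦ p t + o.rotation (θ t) w) ω z x := by
  refine (HasDerivAt.add hp (hasDerivAt_rotation hθ w)).congr_deriv ?_
  rw [← smul_add, ← map_add, sub_add_eq_add_sub]

theorem angularVelocity_ne_zero (hω : HasInstantRotationAt o p ω z x)
    (hα : HasInstantRotationAt o p α A x) (hα0 : α ≠ 0) (hpA : p x ≠ A) : ω ≠ 0 := by
  rintro rfl
  have hzero : α • o.rightAngleRotation (p x - A) = 0 := by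
    rw [← zero_smul ℝ (o.rightAngleRotation (p x - z))]
    exact HasDerivAt.unique hα hω
  simp [hα0, sub_eq_zero, hpA] at hzero

theorem hasDerivAt_norm_sub_sq (hp : HasInstantRotationAt o p ω z x) (X : E) :
    HasDerivAt (fun t ↦ ‖p t - X‖ ^ 2) (-(2 * ω) * o.areaForm (z - p x) (p x - X)) x := by
  refine (HasDerivAt.sub_const X hp).norm_sq.congr_deriv ?_
  rw [real_inner_smul_right, o.inner_rightAngleRotation_right, o.areaForm_swap (z - p x),
    ← neg_sub (p x) z, map_neg]
  ring

theorem deriv_norm_sub_sq_eq_zero_iff (hp : HasInstantRotationAt o p ω z x) (hω : ω ≠ 0) (X : E) :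
    deriv (fun t ↦ ‖p t - X‖ ^ 2) x = 0 ↔ o.areaForm (z - p x) (p x - X) = 0 := by
  simp [(hp.hasDerivAt_norm_sub_sq X).deriv, hω]

/-- In a four-bar linkage with arms `A p`, `B q` and coupler `p q`, this is the Aronhold–Kennedy
construction of the instantaneous centre of the coupler. -/
theorem of_mem_line_arms (hp : HasInstantRotationAt o p α A x)
    (hq : HasInstantRotationAt o q β B x) (hθ : HasDerivAt θ ω x)
    (hpq : ∀ᶠ t in 𝓝 x, q t = p t + o.rotation (θ t) w)
    (hzp : z ∈ line[ℝ, A, p x]) (hzq : z ∈ line[ℝ, B, q x])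
    (harms : o.areaForm (p x - A) (q x - B) ≠ 0) :
    HasInstantRotationAt o p ω z x := by
  obtain ⟨σ, hσ⟩ := mem_affineSpan_pair_iff_exists_lineMap_eq.1 hzp
  obtain ⟨τ, hτ⟩ := mem_affineSpan_pair_iff_exists_lineMap_eq.1 hzq
  simp only [AffineMap.lineMap_apply_module'] at hσ hτ
  have hcoupler : o.rotation (θ x) w = q x - p x := by
    rw [hpq.self_of_nhds, add_sub_cancel_left]
  have hvelocity : β • o.rightAngleRotation (q x - B) =
      α • o.rightAngleRotation (p x - A) + ω • o.rightAngleRotation (q x - p x) := by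
    rw [← hcoupler]
    exact HasDerivAt.unique hq
      ((HasDerivAt.add hp (hasDerivAt_rotation hθ w)).congr_of_eventuallyEq hpq)
  have harm : (β - ω * (1 - τ)) • (q x - B) = (α - ω * (1 - σ)) • (p x - A) := by
    apply o.rightAngleRotation.injective
    have hclosed : q x - p x = (1 - τ) • (q x - B) - (1 - σ) • (p x - A) := by
      linear_combination (norm := module) hτ - hσ
    rw [hclosed] at hvelocity
    simp only [map_sub, map_smul] at hvelocity ⊢
    linear_combination (norm := module) hvelocity
  have hα : α = ω * (1 - σ) := by
    have harea : (α - ω * (1 - σ)) * o.areaForm (p x - A) (q x - B) = 0 := by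
      rw [← smul_eq_mul, ← LinearMap.smul_apply, ← map_smul, ← harm, map_smul,
        LinearMap.smul_apply, o.areaForm_apply_self, smul_zero]
    exact sub_eq_zero.1 ((mul_eq_zero.1 harea).resolve_right harms)
  have hpz : p x - z = (1 - σ) • (p x - A) := by
    rw [← hσ]; module
  unfold HasInstantRotationAt at hp ⊢
  rwa [hpz, map_smul, smul_smul, ← hα]

theorem deriv_coupler_norm_sub_sq_eq_zero_iff (hp : HasInstantRotationAt o p α A x)
    (hq : HasInstantRotationAt o q β B x) (hθ : HasDerivAt θ ω x)
    (hpq : ∀ᶠ t in 𝓝 x, q t = p t + o.rotation (θ t) w)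
    (hzp : z ∈ line[ℝ, A, p x]) (hzq : z ∈ line[ℝ, B, q x])
    (harms : o.areaForm (p x - A) (q x - B) ≠ 0) (hα : α ≠ 0)
    {η : ℝ → ℝ} (hη : HasDerivAt η ω x) (v X : E) :
    deriv (fun t ↦ ‖p t + o.rotation (η t) v - X‖ ^ 2) x = 0 ↔
      o.areaForm (z - (p x + o.rotation (η x) v)) (p x + o.rotation (η x) v - X) = 0 := by
  have hcentre : HasInstantRotationAt o p ω z x :=
    hp.of_mem_line_arms hq hθ hpq hzp hzq harms
  have hpA : p x ≠ A := fun h ↦ harms (by simp [h])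
  exact (hcentre.add_rotation hη v).deriv_norm_sub_sq_eq_zero_iff
    (hcentre.angularVelocity_ne_zero hp hα hpA) X

end HasInstantRotationAt

end OrientedPlane

attribute [local instance] Complex.finrank_real_complex_fact

theorem complex_areaForm_eq_det (u v : ℂ) :
    Complex.orientation.areaForm u v = Matrix.det !![u.re, v.re; u.im, v.im] := by
  rw [Complex.areaForm, Matrix.det_fin_two_of, Complex.mul_im, Complex.conj_re, Complex.conj_im]
  ring

/-- The endpoint of an arm of signed length `r` and direction angle `θ` attached at `A`, with the
Euclidean plane encoded as `ℂ`. -/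
@[simps]
noncomputable def armEndpoint (A : ℂ) (r θ : ℝ) : ℂ := ⟨A.re + r * cos θ, A.im + r * sin θ⟩

theorem armEndpoint_eq_add_rotation (A : ℂ) (r θ : ℝ) :
    armEndpoint A r θ = A + Complex.orientation.rotation θ (r : ℂ) := by
  apply Complex.ext <;>
    simp [Orientation.rotation_apply, mul_comm r, -Complex.ofReal_cos, -Complex.ofReal_sin]

theorem hasInstantRotationAt_armEndpoint {θ : ℝ → ℝ} {ω x : ℝ} (hθ : HasDerivAt θ ω x)
    (A : ℂ) (r : ℝ) :
    HasInstantRotationAt Complex.orientation (fun t ↦ armEndpoint A r (θ t)) ω A x := by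
  simp only [armEndpoint_eq_add_rotation]
  exact (hasInstantRotationAt_const _ A ω x).add_rotation hθ r

theorem areaForm_armEndpoint_sub (A B : ℂ) (r₁ r₂ θ₁ θ₂ : ℝ) :
    Complex.orientation.areaForm (armEndpoint A r₁ θ₁ - A) (armEndpoint B r₂ θ₂ - B) =
      r₁ * r₂ * sin (θ₂ - θ₁) := by
  simp only [complex_areaForm_eq_det, Matrix.det_fin_two_of, Complex.sub_re, Complex.sub_im,
    armEndpoint_re, armEndpoint_im, sin_sub]
  ring

theorem armEndpoint_mem_line {r : ℝ} (hr : r ≠ 0) (A : ℂ) (r' θ : ℝ) :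
    armEndpoint A r' θ ∈ line[ℝ, A, armEndpoint A r θ] := by
  refine mem_affineSpan_pair_iff_exists_lineMap_eq.2 ⟨r' / r, ?_⟩
  rw [AffineMap.lineMap_apply_module']
  apply Complex.ext <;>
    simp only [Complex.add_re, Complex.add_im, Complex.sub_re, Complex.sub_im, Complex.smul_re,
      Complex.smul_im, smul_eq_mul, armEndpoint_re, armEndpoint_im] <;>
    field_simp <;> ring

theorem deriv_norm_armEndpoint_sub_sq_eq_zero_iff {A B : ℂ} {r₁ r₂ r₁' r₂' d γ α β ω x : ℝ}
    {θ₁ θ₂ ψ : ℝ → ℝ} (hr₁ : r₁ ≠ 0) (hr₂ : r₂ ≠ 0) (hα : α ≠ 0)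
    (hθ₁ : HasDerivAt θ₁ α x) (hθ₂ : HasDerivAt θ₂ β x) (hψ : HasDerivAt ψ ω x)
    (hcoupler : ∀ᶠ t in 𝓝 x,
      armEndpoint B r₂ (θ₂ t) = armEndpoint (armEndpoint A r₁ (θ₁ t)) d (ψ t - γ))
    (hcrossing : armEndpoint B r₂' (θ₂ x) = armEndpoint A r₁' (θ₁ x))
    (hsin : sin (θ₂ x - θ₁ x) ≠ 0) (b : ℝ) (X : ℂ) :
    deriv (fun t ↦ ‖armEndpoint (armEndpoint A r₁ (θ₁ t)) b (ψ t) - X‖ ^ 2) x = 0 ↔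
      Complex.orientation.areaForm
        (armEndpoint A r₁' (θ₁ x) - armEndpoint (armEndpoint A r₁ (θ₁ x)) b (ψ x))
        (armEndpoint (armEndpoint A r₁ (θ₁ x)) b (ψ x) - X) = 0 := by
  have hcrossing_mem : armEndpoint A r₁' (θ₁ x) ∈ line[ℝ, B, armEndpoint B r₂ (θ₂ x)] :=
    hcrossing ▸ armEndpoint_mem_line hr₂ B _ _
  have harms : Complex.orientation.areaForm (armEndpoint A r₁ (θ₁ x) - A)
      (armEndpoint B r₂ (θ₂ x) - B) ≠ 0 := by
    rw [areaForm_armEndpoint_sub]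
    exact mul_ne_zero (mul_ne_zero hr₁ hr₂) hsin
  simp only [armEndpoint_eq_add_rotation (armEndpoint A r₁ _)] at hcoupler ⊢
  exact (hasInstantRotationAt_armEndpoint hθ₁ A r₁).deriv_coupler_norm_sub_sq_eq_zero_iff
    (hasInstantRotationAt_armEndpoint hθ₂ B r₂) (hψ.sub_const γ) hcoupler
    (armEndpoint_mem_line hr₁ A _ _) hcrossing_mem harms hα hψ b X

theorem stmt_17 (l m c a b γ φ₀ x₀ y₀ : ℝ)
    (hl : 0 < l) (hm : 0 < m) (ha : 0 < a) (hb : 0 < b) (hc : c ≠ 0)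
    (ρ s t : ℝ → ℝ)
    (hρ : DifferentiableAt ℝ ρ φ₀) (hs : DifferentiableAt ℝ s φ₀)
    (ht : DifferentiableAt ℝ t φ₀)
    (h1 : ∀ᶠ φ in nhds φ₀, (l + s φ) * Real.cos φ = c - (m + t φ) * Real.cos (ρ φ))
    (h2 : ∀ᶠ φ in nhds φ₀, (l + s φ) * Real.sin φ = (m + t φ) * Real.sin (ρ φ))
    (h3 : ∀ᶠ φ in nhds φ₀,
      (c - m * Real.cos (ρ φ) - l * Real.cos φ) ^ 2 +
        (m * Real.sin (ρ φ) - l * Real.sin φ) ^ 2 = a ^ 2)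
    (hs0 : s φ₀ ≠ 0) (hls : l + s φ₀ ≠ 0) (hmt : m + t φ₀ ≠ 0)
    (hsin : Real.sin (ρ φ₀) ≠ 0)
    (hsin' : Real.sin (φ₀ + ρ φ₀) ≠ 0)
    (ψ : ℝ → ℝ) (hψ : DifferentiableAt ℝ ψ φ₀)
    (h4 : ∀ᶠ φ in nhds φ₀,
      a * Real.cos (ψ φ - γ) = c - m * Real.cos (ρ φ) - l * Real.cos φ)
    (h5 : ∀ᶠ φ in nhds φ₀,
      a * Real.sin (ψ φ - γ) = m * Real.sin (ρ φ) - l * Real.sin φ) :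
    deriv (fun φ =>
        (l * Real.cos φ + b * Real.cos (ψ φ) - x₀) ^ 2 +
        (l * Real.sin φ + b * Real.sin (ψ φ) - y₀) ^ 2) φ₀ = 0 ↔
      Matrix.det
        !![(l + s φ₀) * Real.cos φ₀ - (l * Real.cos φ₀ + b * Real.cos (ψ φ₀)),
             (l * Real.cos φ₀ + b * Real.cos (ψ φ₀)) - x₀;
           (l + s φ₀) * Real.sin φ₀ - (l * Real.sin φ₀ + b * Real.sin (ψ φ₀)),
             (l * Real.sin φ₀ + b * Real.sin (ψ φ₀)) - y₀] = 0 := by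
  -- The base angle `ρ` of the second arm is measured clockwise from the negative `x`-axis, hence
  -- the signs in `-m` and `-ρ`.
  have hcoupler : ∀ᶠ φ in 𝓝 φ₀,
      armEndpoint c (-m) (-ρ φ) = armEndpoint (armEndpoint 0 l φ) a (ψ φ - γ) := by
    filter_upwards [h4, h5] with φ hcos hsin
    apply Complex.ext <;> simp only [armEndpoint_re, armEndpoint_im, Complex.ofReal_re,
      Complex.ofReal_im, Complex.zero_re, Complex.zero_im, cos_neg, sin_neg] <;> linarith
  have hcrossing : armEndpoint c (-(m + t φ₀)) (-ρ φ₀) = armEndpoint 0 (l + s φ₀) φ₀ := by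
    apply Complex.ext <;> simp only [armEndpoint_re, armEndpoint_im, Complex.ofReal_re,
      Complex.ofReal_im, Complex.zero_re, Complex.zero_im, cos_neg, sin_neg] <;>
      linarith [h1.self_of_nhds, h2.self_of_nhds]
  have hsin_sub : sin (-ρ φ₀ - φ₀) ≠ 0 := by
    rwa [← neg_add', sin_neg, neg_ne_zero, add_comm]
  have key := deriv_norm_armEndpoint_sub_sq_eq_zero_iff hl.ne' (neg_ne_zero.2 hm.ne') one_ne_zero
    (hasDerivAt_id' φ₀) hρ.hasDerivAt.neg hψ.hasDerivAt hcoupler hcrossing hsin_sub b ⟨x₀, y₀⟩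
  simpa only [complex_areaForm_eq_det, ← Complex.normSq_eq_norm_sq, Complex.normSq_apply, ← sq,
    Complex.sub_re, Complex.sub_im, armEndpoint_re, armEndpoint_im, Complex.zero_re,
    Complex.zero_im, zero_add] using key
end
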